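/- arXiv:1706.08682 — 3 statements merged into one kernel-verified Lean document; each statement's English description precedes it below -/
import Mathlib

section
/- Let X be a Banach space, T: L_∞[0,1] → X a bounded operator, and suppose T is not strictly singular. If X is separable, then a contradiction follows; hence every bounded operator from L_∞[0,1] to a separable Banach space is strictly singular. -/
open MeasureTheory ENNReal Filter Set

/-- Lebesgue measure on `[0,1]`. -/
noncomputable def μ01 : Measure ℝ := volume.restrict (Set.Icc 0 1)

instance : Fact (volume (Set.Icc (0:ℝ) 1) < ∞) := ⟨by simp⟩
instance : IsFiniteMeasure μ01 := ⟨by simp [μ01]⟩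

/-- An operator is strictly singular if it is bounded below on no infinite-dimensional
closed subspace. -/
def StrictlySingular {E F : Type*} [NormedAddCommGroup E] [NormedSpace ℝ E]
    [NormedAddCommGroup F] [NormedSpace ℝ F] (T : E →L[ℝ] F) : Prop :=
  ∀ Y : Submodule ℝ E, IsClosed (Y : Set E) → ¬ FiniteDimensional ℝ Y →
    ¬ ∃ c : ℝ, 0 < c ∧ ∀ y ∈ Y, c * ‖y‖ ≤ ‖T y‖

/-!
Disjoint sets `B k` on which `T` has semivariation at least `ε` carry functions of norm at most `1`
that glue to a single `h`. After Rosenthal's lemma thins out the sequence, the uncountably many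
vectors `T (1_{⋃ k ∈ D, B k} h)`, `D ⊆ ℕ`, are uniformly separated. So if `X` is separable, the
semivariation of `T` is exhaustive, hence it is small on every set on which finitely many of the
scalar semivariations of `φ ∘ T` are small. Adding up the total variations of these `φ ∘ T` gives a
positive functional `l` on `L^∞` with `‖y‖² ≤ C l(y²)` wherever `T` is bounded below. By
Grothendieck's argument a subspace on which this holds has dimension at most `C l(1)`: if `e i` is
orthonormal for `l(y z)`, then `∑ aᵢ eᵢ(x) ≤ (C ∑ aᵢ²)^{1/2}` for almost all `x` and all `a`
simultaneously, so `∑ eᵢ² ≤ C` almost everywhere.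
-/

section Submeasure

variable {𝓑 : Type*} [BooleanAlgebra 𝓑] {v : 𝓑 → ℝ}

/-- A (finitely subadditive, real-valued) submeasure on a Boolean algebra. -/
structure IsSubmeasure (v : 𝓑 → ℝ) : Prop where
  map_bot : v ⊥ = 0
  mono : Monotone v
  map_sup_le (a b : 𝓑) : v (a ⊔ b) ≤ v a + v b

/-- A set function is exhaustive if it tends to `0` along every disjoint sequence. -/
def IsExhaustive (v : 𝓑 → ℝ) : Prop :=
  ∀ a : ℕ → 𝓑, Pairwise (Function.onFun Disjoint a) → Tendsto (v ∘ a) atTop (nhds 0)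

namespace IsSubmeasure

lemma map_finsetSup_le (hv : IsSubmeasure v) {ι : Type*} (s : Finset ι) (a : ι → 𝓑) :
    v (s.sup a) ≤ ∑ i ∈ s, v (a i) := by
  classical
  induction s using Finset.induction_on with
  | empty => simp [hv.map_bot]
  | insert i s his ih =>
    rw [Finset.sup_insert, Finset.sum_insert his]
    exact (hv.map_sup_le _ _).trans (by gcongr)

lemma le_map_sdiff_add (hv : IsSubmeasure v) (a b : 𝓑) : v a ≤ v (a \ b) + v b :=
  calc v a ≤ v (a \ b ⊔ b) := hv.mono (by rw [sdiff_sup_self]; exact le_sup_left)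
    _ ≤ v (a \ b) + v b := hv.map_sup_le _ _

end IsSubmeasure

namespace IsExhaustive

lemma exists_forall_map_sdiff_le (hv : IsExhaustive v) {c : ℕ → 𝓑} (hc : Monotone c) {η : ℝ}
    (hη : 0 < η) : ∃ m, ∀ m' ≥ m, v (c m' \ c m) ≤ η := by
  by_contra! hcon
  choose next hle hlt using hcon
  have hmono : Monotone fun k => c (next^[k] 0) := hc.comp <| monotone_nat_of_le_succ fun k => by
    rw [Function.iterate_succ_apply']
    exact hle _
  have hlim : ∀ᶠ k in atTop, v (disjointed (fun k => c (next^[k] 0)) (k + 1)) < η :=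
    ((tendsto_add_atTop_iff_nat 1).2 (hv _ (disjoint_disjointed _))).eventually_lt_const hη
  obtain ⟨k, hk⟩ := hlim.exists
  rw [hmono.disjointed_add_one] at hk
  have hjump := hlt (next^[k] 0)
  rw [← Function.iterate_succ_apply' next k] at hjump
  exact hjump.not_gt hk

lemma exists_finset_forall_map_sdiff_le (hv : IsExhaustive v) (hsub : IsSubmeasure v) (a : ℕ → 𝓑)
    (n : ℕ) {η : ℝ} (hη : 0 < η) :
    ∃ s : Finset ℕ, (∀ i ∈ s, n ≤ i) ∧ ∀ j ≥ n, v (a j \ s.sup a) ≤ η := by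
  have hmono : Monotone fun m => (Finset.Icc n m).sup a := fun m m' h =>
    Finset.sup_mono (Finset.Icc_subset_Icc_right h)
  obtain ⟨m, hm⟩ := hv.exists_forall_map_sdiff_le hmono hη
  refine ⟨Finset.Icc n m, fun i hi => (Finset.mem_Icc.1 hi).1, fun j hj => ?_⟩
  refine (hsub.mono (sdiff_le_sdiff_right ?_)).trans (hm (max j m) (le_max_right _ _))
  exact Finset.le_sup (f := a) (Finset.mem_Icc.2 ⟨hj, le_max_left _ _⟩)

lemma exists_map_le_add (hv : IsExhaustive v) (hsub : IsSubmeasure v) {w : ℕ → 𝓑 → ℝ}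
    (hw : ∀ n, IsSubmeasure (w n)) (hwv : ∀ n b, w n b ≤ v b) {a : ℕ → 𝓑} {η ε : ℝ}
    (htail : ∀ n (s : Finset ℕ), (∀ i ∈ s, n < i) → w n (s.sup a) ≤ η) (hε : 0 < ε) :
    ∃ n, w n (a n) ≤ η + ε := by
  obtain ⟨δ, hδ, S, hδS, hS⟩ := posSumOfEncodable (half_pos hε) ℕ
  choose s hs hcapture using fun n => hv.exists_finset_forall_map_sdiff_le hsub a n (hδ n)
  let e (n : ℕ) : 𝓑 := (Finset.range (n + 1)).inf fun j => (s j).sup a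
  have hanti : Monotone fun n => (e n)ᶜ := fun m n h =>
    compl_le_compl (Finset.inf_mono (Finset.range_mono (by gcongr)))
  obtain ⟨n, hn⟩ := hv.exists_forall_map_sdiff_le hanti (half_pos hε)
  have hstep : v (e n \ e (n + 1)) ≤ ε / 2 := by
    simpa only [compl_sdiff_compl] using hn (n + 1) n.le_succ
  have hcaptured : v (a n \ e n) ≤ ε / 2 := by
    rw [← Finset.sup_sdiff_left]
    calc _ ≤ ∑ j ∈ Finset.range (n + 1), v (a n \ (s j).sup a) := hsub.map_finsetSup_le _ _
      _ ≤ ∑ j ∈ Finset.range (n + 1), δ j := Finset.sum_le_sum fun j hj =>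
          hcapture j n (Nat.lt_succ_iff.1 (Finset.mem_range.1 hj))
      _ ≤ ε / 2 := (sum_le_hasSum _ (fun j _ => (hδ j).le) hδS).trans hS
  have hnext : w n (e (n + 1)) ≤ η :=
    ((hw n).mono (Finset.inf_le (Finset.self_mem_range_succ _))).trans (htail n _ (hs (n + 1)))
  refine ⟨n, ?_⟩
  linarith [(hw n).le_map_sdiff_add (a n) (e n), (hw n).le_map_sdiff_add (e n) (e (n + 1)),
    hwv n (a n \ e n), hwv n (e n \ e (n + 1))]

theorem exists_finset_control (hv : IsExhaustive v) (hsub : IsSubmeasure v) {ι : Type*}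
    {w : ι → 𝓑 → ℝ} (hw : ∀ i, IsSubmeasure (w i)) (hwv : ∀ i b, w i b ≤ v b)
    (hnorming : ∀ b r, r < v b → ∃ i, r < w i b) {ε : ℝ} (hε : 0 < ε) :
    ∃ F : Finset ι, ∃ δ > 0, ∀ b, (∀ i ∈ F, w i b ≤ δ) → v b ≤ ε := by
  classical
  by_contra! hcon
  choose b hb hεb using hcon
  choose i hi using fun F δ hδ => hnorming _ _ (hεb F δ hδ)
  obtain ⟨δ, hδ, S, hδS, hS⟩ := posSumOfEncodable (half_pos hε) ℕ
  let F (n : ℕ) : Finset ι := n.rec ∅ fun n F => insert (i F (δ n) (hδ n)) F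
  have hF : Monotone F := monotone_nat_of_le_succ fun n => Finset.subset_insert _ _
  have hmem {k n : ℕ} (h : k < n) : i (F k) (δ k) (hδ k) ∈ F n :=
    hF (Nat.succ_le_of_lt h) (Finset.mem_insert_self _ _)
  obtain ⟨n, hn⟩ := hv.exists_map_le_add hsub (w := fun n => w (i (F n) (δ n) (hδ n)))
    (fun _ => hw _) (fun _ => hwv _) (a := fun n => b (F n) (δ n) (hδ n)) (fun n s hs => calc
      _ ≤ ∑ k ∈ s, w (i (F n) (δ n) (hδ n)) (b (F k) (δ k) (hδ k)) := (hw _).map_finsetSup_le _ _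
      _ ≤ ∑ k ∈ s, δ k := Finset.sum_le_sum fun k hk => hb _ _ _ _ (hmem (hs k hk))
      _ ≤ ε / 2 := (sum_le_hasSum _ (fun k _ => (hδ k).le) hδS).trans hS) (half_pos hε)
  linarith [hi (F n) (δ n) (hδ n)]

end IsExhaustive

end Submeasure

section Rosenthal

variable {v : ℕ → Set ℕ → ℝ} {ε : ℝ}

lemma exists_injective_lt_of_le_nat_mul (hε : 0 < ε) (k : ℕ) (hnonneg : ∀ n A, 0 ≤ v n A)
    (hsuper : ∀ n A B, Disjoint A B → v n A + v n B ≤ v n (A ∪ B)) (hle : ∀ n, v n univ ≤ k * ε) :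
    ∃ σ : ℕ → ℕ, Function.Injective σ ∧ ∀ n, v (σ n) (σ '' {n}ᶜ) < ε := by
  induction k generalizing v with
  | zero =>
    refine ⟨id, Function.injective_id, fun n => ?_⟩
    have hsplit := hsuper n {n}ᶜ {n} disjoint_compl_left
    rw [compl_union_self] at hsplit
    have htotal := hle n
    rw [Nat.cast_zero, zero_mul] at htotal
    rw [image_id, id]
    linarith [hnonneg n {n}]
  | succ k ih =>
    -- Split `ℕ` into the rows `Nat.pair p ·`. If no row works, each row `p` contains an index `τ p`
    -- for which the rest of the row carries mass at least `ε`, and passing to `τ` drops this mass.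
    by_cases hrow : ∃ p : ℕ, ∀ i, v (Nat.pair p i) (Nat.pair p '' {i}ᶜ) < ε
    · obtain ⟨p, hp⟩ := hrow
      exact ⟨Nat.pair p, fun i j h => (Nat.pair_eq_pair.1 h).2, hp⟩
    · push Not at hrow
      choose i hi using hrow
      let τ (p : ℕ) : ℕ := Nat.pair p (i p)
      have hτ : Function.Injective τ := fun p q h => (Nat.pair_eq_pair.1 h).1
      have hbound (p : ℕ) : v (τ p) (range τ) ≤ k * ε := by
        let R := Nat.pair p '' {i p}ᶜ
        have hdisj : Disjoint (range τ) R := by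
          rw [disjoint_left]
          rintro _ ⟨q, rfl⟩ ⟨l, hl, h⟩
          obtain ⟨rfl, rfl⟩ := Nat.pair_eq_pair.1 h
          exact hl rfl
        have hsplit := hsuper (τ p) _ _ (disjoint_compl_right (a := range τ ∪ R))
        rw [union_compl_self] at hsplit
        have htotal := hle (τ p)
        push_cast at htotal
        linarith [hsuper (τ p) _ _ hdisj, hi p, hnonneg (τ p) (range τ ∪ R)ᶜ]
      obtain ⟨σ, hσ, hlt⟩ := ih (v := fun p A => v (τ p) (τ '' A)) (fun _ _ => hnonneg _ _)
        (fun p A B hAB => by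
          simpa only [image_union] using hsuper _ _ _ ((disjoint_image_iff hτ).2 hAB))
        (fun p => by simpa only [image_univ] using hbound p)
      exact ⟨τ ∘ σ, hτ.comp hσ, fun n => by rw [image_comp]; exact hlt n⟩

theorem exists_injective_forall_image_compl_lt (hε : 0 < ε) {C : ℝ} (hnonneg : ∀ n A, 0 ≤ v n A)
    (hsuper : ∀ n A B, Disjoint A B → v n A + v n B ≤ v n (A ∪ B)) (hC : ∀ n, v n univ ≤ C) :
    ∃ σ : ℕ → ℕ, Function.Injective σ ∧ ∀ n, v (σ n) (σ '' {n}ᶜ) < ε := by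
  obtain ⟨k, hk⟩ := exists_nat_ge (C / ε)
  exact exists_injective_lt_of_le_nat_mul hε k hnonneg hsuper fun n =>
    (hC n).trans ((div_le_iff₀ hε).1 hk)

end Rosenthal

section Functionals

lemma exists_norm_le_one_lt_apply {E : Type*} [NormedAddCommGroup E] [NormedSpace ℝ E]
    (φ : StrongDual ℝ E) {r : ℝ} (hr : r < ‖φ‖) : ∃ x, ‖x‖ ≤ 1 ∧ r < φ x := by
  obtain ⟨x, hx, hrx⟩ := ContinuousLinearMap.exists_lt_apply_of_lt_opNorm φ hr
  rcases lt_abs.1 (Real.norm_eq_abs _ ▸ hrx) with h | h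
  · exact ⟨x, hx.le, h⟩
  · exact ⟨-x, by rw [norm_neg]; exact hx.le, by rwa [map_neg]⟩

lemma positiveLinearMap_sum_apply {E ι : Type*} [AddCommGroup E] [PartialOrder E]
    [IsOrderedAddMonoid E] [Module ℝ E] (l : ι → E →ₚ[ℝ] ℝ) (F : Finset ι) (x : E) :
    (∑ i ∈ F, l i) x = ∑ i ∈ F, l i x :=
  map_sum ({ toFun := fun m => m x, map_zero' := rfl, map_add' := fun _ _ => rfl } :
    (E →ₚ[ℝ] ℝ) →+ ℝ) l F

end Functionals

section Linfty

variable {Ω : Type*} [MeasurableSpace Ω] {μ : Measure Ω}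

lemma linfty_norm_le_iff {f : Lp ℝ ∞ μ} {C : ℝ} (hC : 0 ≤ C) :
    ‖f‖ ≤ C ↔ ∀ᵐ x ∂μ, |f x| ≤ C := by
  refine ⟨fun h => ?_, fun h => ?_⟩
  · filter_upwards [ae_le_lpNorm_exponent_top (Lp.memLp f)] with x hx
    rw [← toReal_eLpNorm (Lp.aestronglyMeasurable f)] at hx
    exact hx.trans h
  · rw [Lp.norm_def, eLpNorm_exponent_top]
    exact ENNReal.toReal_le_of_le_ofReal hC (eLpNormEssSup_le_of_ae_bound h)

lemma linfty_ae_abs_le_norm (f : Lp ℝ ∞ μ) : ∀ᵐ x ∂μ, |f x| ≤ ‖f‖ :=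
  (linfty_norm_le_iff (norm_nonneg f)).1 le_rfl

/-- Pointwise multiplication on `L^∞`, as a bounded bilinear map. -/
noncomputable def linftyMul : Lp ℝ ∞ μ →L[ℝ] Lp ℝ ∞ μ →L[ℝ] Lp ℝ ∞ μ :=
  (ContinuousLinearMap.mul ℝ ℝ).holderL μ ∞ ∞ ∞

lemma coeFn_linftyMul (f g : Lp ℝ ∞ μ) : linftyMul f g =ᵐ[μ] fun x => f x * g x :=
  (ContinuousLinearMap.mul ℝ ℝ).coeFn_holder f g

lemma norm_linftyMul_le (f : Lp ℝ ∞ μ) : ‖linftyMul f‖ ≤ ‖f‖ := by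
  refine ContinuousLinearMap.opNorm_le_bound _ (norm_nonneg f) fun g => ?_
  rw [linfty_norm_le_iff (by positivity)]
  filter_upwards [coeFn_linftyMul f g, linfty_ae_abs_le_norm f, linfty_ae_abs_le_norm g]
    with x hx hf hg
  rw [hx, abs_mul]
  gcongr

lemma linftyMul_comm (f g : Lp ℝ ∞ μ) : linftyMul f g = linftyMul g f := by
  apply Lp.ext
  filter_upwards [coeFn_linftyMul f g, coeFn_linftyMul g f] with x hfg hgf
  rw [hfg, hgf, mul_comm]

lemma linftyMul_assoc (f g h : Lp ℝ ∞ μ) :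
    linftyMul (linftyMul f g) h = linftyMul f (linftyMul g h) := by
  apply Lp.ext
  filter_upwards [coeFn_linftyMul (linftyMul f g) h, coeFn_linftyMul f g,
    coeFn_linftyMul f (linftyMul g h), coeFn_linftyMul g h] with x hfg_h hfg hf_gh hgh
  rw [hfg_h, hfg, hf_gh, hgh, mul_assoc]

/-- The class in `L^∞` of the indicator function of a measurable set; measurable sets are bundled
because they are used as elements of their Boolean algebra. -/
noncomputable def linftyInd (s : {s : Set Ω // MeasurableSet s}) : Lp ℝ ∞ μ :=
  ((memLp_top_const (1 : ℝ)).indicator s.2).toLp _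

variable {s t : {s : Set Ω // MeasurableSet s}}

lemma coeFn_linftyInd (s : {s : Set Ω // MeasurableSet s}) :
    linftyInd (μ := μ) s =ᵐ[μ] (s : Set Ω).indicator 1 :=
  MemLp.coeFn_toLp _

lemma coeFn_linftyMul_linftyInd (s : {s : Set Ω // MeasurableSet s}) (g : Lp ℝ ∞ μ) :
    linftyMul (linftyInd s) g =ᵐ[μ] (s : Set Ω).indicator g := by
  filter_upwards [coeFn_linftyMul (linftyInd s) g, coeFn_linftyInd (μ := μ) s] with x hmul hind
  by_cases hx : x ∈ (s : Set Ω) <;> simp [hmul, hind, hx]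

lemma norm_linftyInd_le (s : {s : Set Ω // MeasurableSet s}) : ‖linftyInd (μ := μ) s‖ ≤ 1 := by
  rw [linfty_norm_le_iff zero_le_one]
  filter_upwards [coeFn_linftyInd (μ := μ) s] with x hx
  rw [hx, ← Real.norm_eq_abs]
  exact (norm_indicator_le_norm_self _ _).trans norm_one.le

lemma norm_linftyMul_linftyInd_le (s : {s : Set Ω // MeasurableSet s}) :
    ‖linftyMul (linftyInd (μ := μ) s)‖ ≤ 1 :=
  (norm_linftyMul_le _).trans (norm_linftyInd_le s)

lemma coe_disjoint_coe (h : Disjoint s t) : Disjoint (s : Set Ω) t :=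
  disjoint_iff_inter_eq_empty.2 (congrArg Subtype.val h.eq_bot)

lemma linftyInd_bot : linftyInd (⊥ : {s : Set Ω // MeasurableSet s}) = (0 : Lp ℝ ∞ μ) := by
  apply Lp.ext
  filter_upwards [coeFn_linftyInd (μ := μ) ⊥, Lp.coeFn_zero ℝ ∞ μ] with x hx h0
  rw [hx, h0, MeasurableSet.coe_bot, bot_eq_empty, indicator_empty]
  rfl

lemma linftyMul_linftyInd_top (g : Lp ℝ ∞ μ) : linftyMul (linftyInd ⊤) g = g := by
  apply Lp.ext
  filter_upwards [coeFn_linftyMul_linftyInd ⊤ g] with x hx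
  simp [hx]

lemma linftyMul_linftyInd_linftyInd (s t : {s : Set Ω // MeasurableSet s}) :
    linftyMul (linftyInd s) (linftyInd t) = linftyInd (μ := μ) (s ⊓ t) := by
  apply Lp.ext
  filter_upwards [coeFn_linftyMul (linftyInd (μ := μ) s) (linftyInd t), coeFn_linftyInd (μ := μ) s,
    coeFn_linftyInd (μ := μ) t, coeFn_linftyInd (μ := μ) (s ⊓ t)] with x hmul hs ht hst
  rw [hmul, hs, ht, hst, MeasurableSet.inf_eq_inter, MeasurableSet.coe_inter, inter_indicator_one,
    Pi.mul_apply]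

lemma linftyInd_sup_of_disjoint (h : Disjoint s t) :
    linftyInd (s ⊔ t) = linftyInd s + linftyInd (μ := μ) t := by
  apply Lp.ext
  filter_upwards [coeFn_linftyInd (μ := μ) (s ⊔ t), coeFn_linftyInd (μ := μ) s,
    coeFn_linftyInd (μ := μ) t, Lp.coeFn_add (linftyInd (μ := μ) s) (linftyInd t)]
    with x hst hs ht hadd
  rw [hst, hadd, Pi.add_apply, hs, ht, MeasurableSet.sup_eq_union, MeasurableSet.coe_union,
    indicator_union_of_disjoint (coe_disjoint_coe h)]

lemma linftyInd_nonneg (s : {s : Set Ω // MeasurableSet s}) : 0 ≤ linftyInd (μ := μ) s := by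
  rw [← Lp.coeFn_nonneg]
  filter_upwards [coeFn_linftyInd (μ := μ) s] with x hx
  rw [hx]
  exact indicator_nonneg (fun _ _ => zero_le_one) x

lemma linftyInd_compl (s : {s : Set Ω // MeasurableSet s}) :
    linftyInd (μ := μ) sᶜ = linftyInd ⊤ - linftyInd s := by
  rw [eq_sub_iff_add_eq', ← linftyInd_sup_of_disjoint disjoint_compl_right, sup_compl_eq_top]

lemma norm_smul_linftyInd_top_sub_le {f : Lp ℝ ∞ μ} (hf : 0 ≤ f) :
    ‖‖f‖ • linftyInd ⊤ - f‖ ≤ ‖f‖ := by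
  rw [linfty_norm_le_iff (norm_nonneg f)]
  filter_upwards [Lp.coeFn_sub (‖f‖ • linftyInd ⊤) f, Lp.coeFn_smul ‖f‖ (linftyInd (μ := μ) ⊤),
    coeFn_linftyInd (μ := μ) ⊤, linfty_ae_abs_le_norm f, (Lp.coeFn_nonneg f).2 hf]
    with x hsub hsmul htop hle h0
  rw [hsub, Pi.sub_apply, hsmul, Pi.smul_apply, htop, MeasurableSet.coe_top, top_eq_univ,
    indicator_univ, Pi.one_apply, smul_eq_mul, mul_one, abs_le]
  rw [Pi.zero_apply] at h0
  constructor <;> linarith [abs_le.1 hle]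

lemma norm_linftyMul_add_linftyMul_le_of_disjoint (h : Disjoint s t) {f g : Lp ℝ ∞ μ}
    (hf : ‖f‖ ≤ 1) (hg : ‖g‖ ≤ 1) :
    ‖linftyMul (linftyInd s) f + linftyMul (linftyInd t) g‖ ≤ 1 := by
  rw [linfty_norm_le_iff zero_le_one] at *
  filter_upwards [hf, hg, coeFn_linftyMul_linftyInd s f, coeFn_linftyMul_linftyInd t g,
    Lp.coeFn_add (linftyMul (linftyInd s) f) (linftyMul (linftyInd t) g)] with x hf hg hs ht hadd
  rw [hadd, Pi.add_apply, hs, ht]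
  by_cases hxs : x ∈ (s : Set Ω)
  · rwa [indicator_of_mem hxs, indicator_of_notMem (disjoint_left.1 (coe_disjoint_coe h) hxs),
      add_zero]
  · rw [indicator_of_notMem hxs, zero_add, ← Real.norm_eq_abs]
    exact (norm_indicator_le_norm_self _ _).trans hg

end Linfty

section Semivariation

variable {Ω : Type*} [MeasurableSpace Ω] {μ : Measure Ω} {X Z : Type*} [NormedAddCommGroup X]
  [NormedSpace ℝ X] [NormedAddCommGroup Z] [NormedSpace ℝ Z] {s t : {s : Set Ω // MeasurableSet s}}

/-- The semivariation of an operator on `L^∞`, i.e. of the vector measure `s ↦ T 1_s`: the norm of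
the restriction of `T` to the functions supported in `s`. -/
noncomputable def semivariation (T : Lp ℝ ∞ μ →L[ℝ] X) (s : {s : Set Ω // MeasurableSet s}) : ℝ :=
  ‖T ∘L linftyMul (linftyInd s)‖

lemma semivariation_nonneg (T : Lp ℝ ∞ μ →L[ℝ] X) (s : {s : Set Ω // MeasurableSet s}) :
    0 ≤ semivariation T s :=
  norm_nonneg _

lemma norm_apply_linftyMul_linftyInd_le (T : Lp ℝ ∞ μ →L[ℝ] X) (s : {s : Set Ω // MeasurableSet s})
    (g : Lp ℝ ∞ μ) : ‖T (linftyMul (linftyInd s) g)‖ ≤ semivariation T s * ‖g‖ :=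
  (T ∘L linftyMul (linftyInd s)).le_opNorm g

lemma semivariation_comp_le (φ : X →L[ℝ] Z) (T : Lp ℝ ∞ μ →L[ℝ] X)
    (s : {s : Set Ω // MeasurableSet s}) : semivariation (φ ∘L T) s ≤ ‖φ‖ * semivariation T s :=
  φ.opNorm_comp_le (T ∘L linftyMul (linftyInd s))

lemma semivariation_le_opNorm (T : Lp ℝ ∞ μ →L[ℝ] X) (s : {s : Set Ω // MeasurableSet s}) :
    semivariation T s ≤ ‖T‖ :=
  (T.opNorm_comp_le _).trans
    (mul_le_of_le_one_right (norm_nonneg _) (norm_linftyMul_linftyInd_le s))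

lemma isSubmeasure_semivariation (T : Lp ℝ ∞ μ →L[ℝ] X) : IsSubmeasure (semivariation T) := by
  have hmono : Monotone (semivariation T) := fun s t hst => by
    have hcomp : T ∘L linftyMul (linftyInd s) =
        (T ∘L linftyMul (linftyInd t)) ∘L linftyMul (linftyInd s) := by
      ext g
      simp only [ContinuousLinearMap.comp_apply]
      rw [← linftyMul_assoc, linftyMul_linftyInd_linftyInd, inf_eq_right.2 hst]
    rw [semivariation, hcomp]
    exact (ContinuousLinearMap.opNorm_comp_le _ _).trans
      (mul_le_of_le_one_right (norm_nonneg _) (norm_linftyMul_linftyInd_le s))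
  refine ⟨by simp [semivariation, linftyInd_bot], hmono, fun s t => ?_⟩
  calc semivariation T (s ⊔ t)
    _ = ‖T ∘L linftyMul (linftyInd s) + T ∘L linftyMul (linftyInd (t \ s))‖ := by
      rw [semivariation, ← sup_sdiff_self_right,
        linftyInd_sup_of_disjoint disjoint_sdiff_self_right, map_add, ContinuousLinearMap.comp_add]
    _ ≤ semivariation T s + semivariation T (t \ s) := norm_add_le _ _
    _ ≤ semivariation T s + semivariation T t := by gcongr; exact hmono sdiff_le

lemma exists_lt_semivariation_comp (T : Lp ℝ ∞ μ →L[ℝ] X) {r : ℝ} (hr : r < semivariation T s) :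
    ∃ φ : StrongDual ℝ X, ‖φ‖ ≤ 1 ∧ r < semivariation (φ ∘L T) s := by
  obtain ⟨g, hg, hrg⟩ := ContinuousLinearMap.exists_lt_apply_of_lt_opNorm _ hr
  obtain ⟨φ, hφ, hφg⟩ := exists_dual_vector'' ℝ (T (linftyMul (linftyInd s) g))
  refine ⟨φ, hφ, hrg.trans_le ?_⟩
  calc ‖T (linftyMul (linftyInd s) g)‖ = φ (T (linftyMul (linftyInd s) g)) := hφg.symm
    _ ≤ ‖(φ ∘L T) (linftyMul (linftyInd s) g)‖ := Real.le_norm_self _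
    _ ≤ semivariation (φ ∘L T) s * ‖g‖ := norm_apply_linftyMul_linftyInd_le _ _ _
    _ ≤ semivariation (φ ∘L T) s := mul_le_of_le_one_right (semivariation_nonneg _ _) hg.le

lemma semivariation_add_le_of_disjoint (φ : StrongDual ℝ (Lp ℝ ∞ μ)) (h : Disjoint s t) :
    semivariation φ s + semivariation φ t ≤ semivariation φ (s ⊔ t) := by
  refine add_le_of_forall_lt fun a ha b hb => ?_
  obtain ⟨f, hf, haf⟩ := exists_norm_le_one_lt_apply (φ ∘L linftyMul (linftyInd s)) ha
  obtain ⟨g, hg, hbg⟩ := exists_norm_le_one_lt_apply (φ ∘L linftyMul (linftyInd t)) hb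
  let u := linftyMul (linftyInd s) f + linftyMul (linftyInd t) g
  have hu : ‖u‖ ≤ 1 := norm_linftyMul_add_linftyMul_le_of_disjoint h hf hg
  have hsu : linftyMul (linftyInd (s ⊔ t)) u = u := by
    simp only [u, map_add, ← linftyMul_assoc, linftyMul_linftyInd_linftyInd, inf_of_le_right,
      le_sup_left, le_sup_right]
  calc a + b ≤ φ u := by rw [map_add]; exact (add_lt_add haf hbg).le
    _ ≤ ‖φ (linftyMul (linftyInd (s ⊔ t)) u)‖ := by rw [hsu]; exact Real.le_norm_self _
    _ ≤ semivariation φ (s ⊔ t) * ‖u‖ := norm_apply_linftyMul_linftyInd_le _ _ _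
    _ ≤ semivariation φ (s ⊔ t) := mul_le_of_le_one_right (semivariation_nonneg _ _) hu

/-- A norming functional `Λ` for `φ`, applied to the functionals `g ↦ φ (f * g)`, gives a positive
functional of `f`. -/
theorem exists_positiveLinearMap_semivariation_le (φ : StrongDual ℝ (Lp ℝ ∞ μ)) :
    ∃ l : Lp ℝ ∞ μ →ₚ[ℝ] ℝ, ∀ s, semivariation φ s ≤ l (linftyInd s) := by
  obtain ⟨Λ, hΛ, hΛφ⟩ := exists_dual_vector'' ℝ φ
  let l : Lp ℝ ∞ μ →L[ℝ] ℝ := Λ ∘L ContinuousLinearMap.compL ℝ _ _ _ φ ∘L linftyMul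
  have hl_le (f : Lp ℝ ∞ μ) : l f ≤ ‖φ ∘L linftyMul f‖ :=
    (Real.le_norm_self _).trans ((Λ.le_opNorm _).trans (mul_le_of_le_one_left (norm_nonneg _) hΛ))
  have hl_top : l (linftyInd ⊤) = ‖φ‖ := by
    have : φ ∘L linftyMul (linftyInd ⊤) = φ := by ext g; simp [linftyMul_linftyInd_top]
    simp only [l, ContinuousLinearMap.comp_apply, ContinuousLinearMap.compL_apply, this, hΛφ]
    rfl
  have hl_nonneg (f : Lp ℝ ∞ μ) (hf : 0 ≤ f) : 0 ≤ l f := by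
    have h : l (‖f‖ • linftyInd ⊤ - f) ≤ ‖φ‖ * ‖f‖ := calc
      _ ≤ ‖φ‖ * ‖linftyMul (‖f‖ • linftyInd ⊤ - f)‖ := (hl_le _).trans (φ.opNorm_comp_le _)
      _ ≤ ‖φ‖ * ‖f‖ := by
        gcongr
        exact (norm_linftyMul_le _).trans (norm_smul_linftyInd_top_sub_le hf)
    rw [map_sub, map_smul, hl_top, smul_eq_mul] at h
    linarith
  refine ⟨.mk₀ l.toLinearMap hl_nonneg, fun s => ?_⟩
  change _ ≤ l (linftyInd s)
  have hcompl : l (linftyInd sᶜ) ≤ semivariation φ sᶜ := hl_le _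
  rw [linftyInd_compl, map_sub, hl_top] at hcompl
  have hsuper := semivariation_add_le_of_disjoint φ (disjoint_compl_right (a := s))
  linarith [semivariation_le_opNorm φ (s ⊔ sᶜ)]

end Semivariation

section Exhaustive

variable {Ω : Type*} [MeasurableSpace Ω] {μ : Measure Ω} {X : Type*} [NormedAddCommGroup X]
  [NormedSpace ℝ X] {B : ℕ → {s : Set Ω // MeasurableSet s}} {ε : ℝ}

/-- The union of the members of a sequence of measurable sets with index in `M`, as an element of
the Boolean algebra of measurable sets. -/
def unionOver (B : ℕ → {s : Set Ω // MeasurableSet s}) (M : Set ℕ) :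
    {s : Set Ω // MeasurableSet s} :=
  ⟨⋃ k ∈ M, B k, .biUnion M.to_countable fun k _ => (B k).2⟩

lemma unionOver_mono (B : ℕ → {s : Set Ω // MeasurableSet s}) : Monotone (unionOver B) :=
  fun _ _ h => biUnion_subset_biUnion_left h

lemma unionOver_union (B : ℕ → {s : Set Ω // MeasurableSet s}) (M N : Set ℕ) :
    unionOver B (M ∪ N) = unionOver B M ⊔ unionOver B N :=
  Subtype.ext (biUnion_union M N _)

lemma unionOver_singleton (B : ℕ → {s : Set Ω // MeasurableSet s}) (n : ℕ) :
    unionOver B {n} = B n :=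
  Subtype.ext (biUnion_singleton n _)

lemma unionOver_image (B : ℕ → {s : Set Ω // MeasurableSet s}) (σ : ℕ → ℕ) (M : Set ℕ) :
    unionOver B (σ '' M) = unionOver (B ∘ σ) M :=
  Subtype.ext (biUnion_image)

lemma disjoint_unionOver (hB : Pairwise (Function.onFun Disjoint B)) {M N : Set ℕ}
    (h : Disjoint M N) : Disjoint (unionOver B M) (unionOver B N) := by
  have hcoe : Disjoint (unionOver B M : Set Ω) (unionOver B N) := by
    simp only [unionOver, disjoint_iUnion_left, disjoint_iUnion_right]
    exact fun n hn m hm => coe_disjoint_coe (hB (h.ne_of_mem hm hn))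
  rw [disjoint_iff]
  exact Subtype.ext (disjoint_iff.1 hcoe)

lemma exists_glue (hB : Pairwise (Function.onFun Disjoint B)) {g : ℕ → Lp ℝ ∞ μ}
    (hg : ∀ n, ‖g n‖ ≤ 1) :
    ∃ h : Lp ℝ ∞ μ, ‖h‖ ≤ 1 ∧
      ∀ n, linftyMul (linftyInd (B n)) h = linftyMul (linftyInd (B n)) (g n) := by
  obtain ⟨p, hp, hpg⟩ := exists_measurable_piecewise (fun n => (B n : Set Ω)) (fun n => (B n).2)
    (fun n => g n) (fun n => (Lp.stronglyMeasurable (g n)).measurable) fun i j hij x hx =>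
      ((coe_disjoint_coe (hB hij)).notMem_of_mem_left hx.1 hx.2).elim
  let q (x : Ω) : ℝ := max (-1) (min 1 (p x))
  have hq (x : Ω) : |q x| ≤ 1 := abs_le.2 ⟨le_max_left _ _, max_le (by norm_num) (min_le_left _ _)⟩
  have hqL : MemLp q ∞ μ :=
    memLp_top_of_bound (by fun_prop) 1 (ae_of_all _ hq)
  refine ⟨hqL.toLp q, (linfty_norm_le_iff zero_le_one).2 ?_, fun n => ?_⟩
  · filter_upwards [hqL.coeFn_toLp] with x hx
    rw [hx]
    exact hq x
  · apply Lp.ext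
    filter_upwards [coeFn_linftyMul_linftyInd (B n) (hqL.toLp q), hqL.coeFn_toLp,
      coeFn_linftyMul_linftyInd (B n) (g n), (linfty_norm_le_iff zero_le_one).1 (hg n)]
      with x hBq hxq hBg hxg
    rw [hBq, hBg]
    by_cases hx : x ∈ (B n : Set Ω)
    · rw [indicator_of_mem hx, indicator_of_mem hx, hxq]
      simp only [q, hpg n hx, min_eq_right (abs_le.1 hxg).2, max_eq_right (abs_le.1 hxg).1]
    · rw [indicator_of_notMem hx, indicator_of_notMem hx]

lemma exists_injective_semivariation_unionOver_lt (hB : Pairwise (Function.onFun Disjoint B))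
    {ψ : ℕ → StrongDual ℝ (Lp ℝ ∞ μ)} {C : ℝ} (hψ : ∀ n, ‖ψ n‖ ≤ C) (hε : 0 < ε) :
    ∃ σ : ℕ → ℕ, Function.Injective σ ∧
      ∀ n, semivariation (ψ (σ n)) (unionOver (B ∘ σ) {n}ᶜ) < ε := by
  obtain ⟨σ, hσ, hlt⟩ := exists_injective_forall_image_compl_lt hε
    (v := fun n M => semivariation (ψ n) (unionOver B M)) (fun n M => semivariation_nonneg _ _)
    (fun n M N hMN => by
      rw [unionOver_union]
      exact semivariation_add_le_of_disjoint _ (disjoint_unionOver hB hMN))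
    (fun n => (semivariation_le_opNorm _ _).trans (hψ n))
  exact ⟨σ, hσ, fun n => by simpa only [unionOver_image] using hlt n⟩

lemma sub_le_apply_unionOver_sub (hB : Pairwise (Function.onFun Disjoint B))
    (ψ : StrongDual ℝ (Lp ℝ ∞ μ)) {h : Lp ℝ ∞ μ} (hh : ‖h‖ ≤ 1) {n : ℕ} {D D' : Set ℕ}
    (hn : n ∈ D) (hn' : n ∉ D') :
    ψ (linftyMul (linftyInd (B n)) h) - 2 * semivariation ψ (unionOver B {n}ᶜ) ≤
      ψ (linftyMul (linftyInd (unionOver B D)) h) -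
        ψ (linftyMul (linftyInd (unionOver B D')) h) := by
  have hsmall {M : Set ℕ} (hM : n ∉ M) : |ψ (linftyMul (linftyInd (unionOver B M)) h)| ≤
      semivariation ψ (unionOver B {n}ᶜ) :=
    calc _ ≤ semivariation ψ (unionOver B M) * ‖h‖ := norm_apply_linftyMul_linftyInd_le ψ _ h
      _ ≤ semivariation ψ (unionOver B M) := mul_le_of_le_one_right (semivariation_nonneg _ _) hh
      _ ≤ semivariation ψ (unionOver B {n}ᶜ) := (isSubmeasure_semivariation ψ).mono
        (unionOver_mono B (subset_compl_singleton_iff.2 hM))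
  have hsplit : linftyInd (unionOver B D) =
      linftyInd (μ := μ) (B n) + linftyInd (unionOver B (D \ {n})) := by
    rw [← unionOver_singleton B n, ← linftyInd_sup_of_disjoint
      (disjoint_unionOver hB disjoint_sdiff_right), ← unionOver_union,
      union_sdiff_cancel (singleton_subset_iff.2 hn)]
  rw [hsplit, map_add, add_apply, map_add]
  linarith [neg_le_of_abs_le (hsmall (M := D \ {n}) fun h => h.2 rfl), le_of_abs_le (hsmall hn')]

lemma exists_pairwise_le_norm_sub (T : Lp ℝ ∞ μ →L[ℝ] X)
    (hB : Pairwise (Function.onFun Disjoint B)) (hε : 0 < ε) (hT : ∀ n, ε < semivariation T (B n)) :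
    ∃ y : Set ℕ → X, Pairwise fun D D' => ε / 2 ≤ ‖y D - y D'‖ := by
  choose φ hφ hεφ using fun n => exists_lt_semivariation_comp T (hT n)
  choose g hg hεg using fun n =>
    exists_norm_le_one_lt_apply ((φ n ∘L T) ∘L linftyMul (linftyInd (B n))) (hεφ n)
  have hψ (n : ℕ) : ‖φ n ∘L T‖ ≤ ‖T‖ :=
    ((φ n).opNorm_comp_le T).trans (mul_le_of_le_one_left (norm_nonneg _) (hφ n))
  obtain ⟨σ, hσ, hoff⟩ :=
    exists_injective_semivariation_unionOver_lt hB hψ (show (0 : ℝ) < ε / 4 by positivity)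
  have hBσ : Pairwise (Function.onFun Disjoint (B ∘ σ)) := fun i j hij => hB (hσ.ne hij)
  obtain ⟨h, hh, hglue⟩ := exists_glue hBσ fun n => hg (σ n)
  let y (D : Set ℕ) : X := T (linftyMul (linftyInd (unionOver (B ∘ σ) D)) h)
  have hsep {n : ℕ} {D D' : Set ℕ} (hn : n ∈ D) (hn' : n ∉ D') : ε / 2 ≤ ‖y D - y D'‖ := by
    have happly := sub_le_apply_unionOver_sub hBσ (φ (σ n) ∘L T) hh hn hn'
    rw [hglue n] at happly
    have hnorm : φ (σ n) (y D - y D') ≤ ‖y D - y D'‖ := (Real.le_norm_self _).trans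
      (((φ (σ n)).le_opNorm _).trans (mul_le_of_le_one_left (norm_nonneg _) (hφ _)))
    rw [map_sub] at hnorm
    have hdiag := hεg (σ n)
    simp only [ContinuousLinearMap.comp_apply, Function.comp_apply] at happly hdiag
    linarith [hoff n]
  refine ⟨y, fun D D' hne => ?_⟩
  obtain ⟨n, hn⟩ := Set.symmDiff_nonempty.2 hne
  rcases hn with ⟨hD, hD'⟩ | ⟨hD', hD⟩
  · exact hsep hD hD'
  · rw [norm_sub_rev]
    exact hsep hD' hD

theorem isExhaustive_semivariation [TopologicalSpace.SeparableSpace X] (T : Lp ℝ ∞ μ →L[ℝ] X) :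
    IsExhaustive (semivariation T) := by
  refine fun a ha => tendsto_order.2 ⟨fun r hr => .of_forall fun n =>
    hr.trans_le (semivariation_nonneg _ _), fun ε hε => ?_⟩
  by_contra hcon
  have hfreq : ∃ᶠ n in atTop, ε / 2 < semivariation T (a n) :=
    (not_eventually.1 hcon).mono fun n hn => (half_lt_self hε).trans_le (not_lt.1 hn)
  obtain ⟨τ, hτ, hlt⟩ := extraction_of_frequently_atTop hfreq
  obtain ⟨y, hy⟩ := exists_pairwise_le_norm_sub T (B := a ∘ τ)
    (fun i j hij => ha (hτ.injective.ne hij)) (half_pos hε) hlt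
  have hcount : Countable (Set ℕ) := Pairwise.countable_of_isOpen_disjoint
    (s := fun D => Metric.ball (y D) (ε / 8))
    (fun D D' hne => Metric.ball_disjoint_ball (by linarith [hy hne, dist_eq_norm (y D) (y D')]))
    (fun _ => Metric.isOpen_ball) (fun _ => Metric.nonempty_ball.2 (by positivity))
  obtain ⟨f, hf⟩ := exists_surjective_nat (Set ℕ)
  exact Function.cantor_surjective f hf

end Exhaustive

section Domination

variable {Ω : Type*} [MeasurableSpace Ω] {μ : Measure Ω} {X : Type*} [NormedAddCommGroup X]
  [NormedSpace ℝ X] {T : Lp ℝ ∞ μ →L[ℝ] X}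

lemma exists_positiveLinearMap_control (hT : IsExhaustive (semivariation T)) {ε : ℝ} (hε : 0 < ε) :
    ∃ l : Lp ℝ ∞ μ →ₚ[ℝ] ℝ, ∃ δ > 0, ∀ s, ε < semivariation T s → δ ≤ l (linftyInd s) := by
  obtain ⟨F, δ, hδ, hF⟩ := hT.exists_finset_control (isSubmeasure_semivariation T)
    (w := fun φ : {φ : StrongDual ℝ X // ‖φ‖ ≤ 1} => semivariation (φ.1 ∘L T))
    (fun φ => isSubmeasure_semivariation _)
    (fun φ s => (semivariation_comp_le _ _ _).trans
      (mul_le_of_le_one_left (semivariation_nonneg _ _) φ.2))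
    (fun s r hr =>
      let ⟨φ, hφ, hlt⟩ := exists_lt_semivariation_comp T hr
      ⟨⟨φ, hφ⟩, hlt⟩) hε
  choose l hl using fun φ : {φ : StrongDual ℝ X // ‖φ‖ ≤ 1} =>
    exists_positiveLinearMap_semivariation_le (φ.1 ∘L T)
  refine ⟨∑ φ ∈ F, l φ, δ, hδ, fun s hs => ?_⟩
  obtain ⟨φ, hφ, hδφ⟩ : ∃ φ ∈ F, δ < semivariation (φ.1 ∘L T) s := by
    by_contra! hle
    exact hs.not_ge (hF s hle)
  calc δ ≤ l φ (linftyInd s) := hδφ.le.trans (hl φ s)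
    _ ≤ ∑ φ ∈ F, l φ (linftyInd s) :=
      Finset.single_le_sum (f := fun φ => l φ (linftyInd s))
        (fun φ _ => map_nonneg (l φ) (linftyInd_nonneg s)) hφ
    _ = (∑ φ ∈ F, l φ) (linftyInd s) := (positiveLinearMap_sum_apply _ _ _).symm

lemma exists_levelSet (y : Lp ℝ ∞ μ) {r : ℝ} (hr : 0 ≤ r) :
    ∃ s, ‖linftyMul (linftyInd sᶜ) y‖ ≤ r ∧ r ^ 2 • linftyInd s ≤ linftyMul y y := by
  let s : {s : Set Ω // MeasurableSet s} := ⟨{x | r ≤ |y x|},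
    measurableSet_le measurable_const (Lp.stronglyMeasurable y).measurable.norm⟩
  refine ⟨s, ?_, ?_⟩
  · rw [linfty_norm_le_iff hr]
    filter_upwards [coeFn_linftyMul_linftyInd sᶜ y] with x hx
    rw [hx, MeasurableSet.coe_compl]
    by_cases hxs : r ≤ |y x|
    · rwa [indicator_of_notMem (show x ∉ (s : Set Ω)ᶜ from notMem_compl_iff.2 hxs), abs_zero]
    · rw [indicator_of_mem (show x ∈ (s : Set Ω)ᶜ from hxs)]
      exact (not_le.1 hxs).le
  · rw [← Lp.coeFn_le]
    filter_upwards [coeFn_linftyMul y y, Lp.coeFn_smul (r ^ 2) (linftyInd (μ := μ) s),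
      coeFn_linftyInd (μ := μ) s] with x hmul hsmul hind
    rw [hmul, hsmul, Pi.smul_apply, hind, smul_eq_mul, ← sq]
    by_cases hxs : r ≤ |y x|
    · rw [indicator_of_mem (show x ∈ (s : Set Ω) from hxs), Pi.one_apply, mul_one, ← sq_abs (y x)]
      gcongr
    · rw [indicator_of_notMem (show x ∉ (s : Set Ω) from hxs), mul_zero]
      positivity

theorem exists_positiveLinearMap_norm_sq_le (hT : IsExhaustive (semivariation T)) {c : ℝ}
    (hc : 0 < c) : ∃ l : Lp ℝ ∞ μ →ₚ[ℝ] ℝ, ∃ C, 0 ≤ C ∧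
      ∀ y, c * ‖y‖ ≤ ‖T y‖ → ‖y‖ ^ 2 ≤ C * l (linftyMul y y) := by
  obtain ⟨l, δ, hδ, hl⟩ := exists_positiveLinearMap_control hT (show 0 < c / 4 by positivity)
  let θ := c / (2 * (‖T‖ + 1))
  have hθ : 0 < θ := by positivity
  have hTθ : ‖T‖ * θ ≤ c / 2 := by
    have : θ * (‖T‖ + 1) = c / 2 := by simp only [θ]; field_simp
    linarith
  refine ⟨l, (θ ^ 2 * δ)⁻¹, by positivity, fun y hy => ?_⟩
  obtain ⟨s, hsc, hs⟩ := exists_levelSet y (show 0 ≤ θ * ‖y‖ by positivity)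
  rw [inv_mul_eq_div, le_div_iff₀ (by positivity)]
  obtain rfl | hy0 := eq_or_ne y 0
  · simp
  have hlarge : c / 4 < semivariation T s := by
    have hsplit : y = linftyMul (linftyInd s) y + linftyMul (linftyInd sᶜ) y := by
      rw [← add_apply, ← map_add, ← linftyInd_sup_of_disjoint disjoint_compl_right,
        sup_compl_eq_top, linftyMul_linftyInd_top]
    have hbound : c * ‖y‖ ≤ (semivariation T s + c / 2) * ‖y‖ := calc
      c * ‖y‖ ≤ ‖T (linftyMul (linftyInd s) y) + T (linftyMul (linftyInd sᶜ) y)‖ := by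
        rwa [← map_add, ← hsplit]
      _ ≤ semivariation T s * ‖y‖ + ‖T‖ * (θ * ‖y‖) := norm_add_le_of_le
        (norm_apply_linftyMul_linftyInd_le T s y) (T.le_opNorm_of_le hsc)
      _ ≤ (semivariation T s + c / 2) * ‖y‖ := by rw [← mul_assoc, ← add_mul]; gcongr
    linarith [le_of_mul_le_mul_right hbound (norm_pos_iff.2 hy0)]
  calc ‖y‖ ^ 2 * (θ ^ 2 * δ) = (θ * ‖y‖) ^ 2 * δ := by ring
    _ ≤ (θ * ‖y‖) ^ 2 * l (linftyInd s) := by gcongr; exact hl s hlarge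
    _ = l ((θ * ‖y‖) ^ 2 • linftyInd s) := by rw [map_smul, smul_eq_mul]
    _ ≤ l (linftyMul y y) := OrderHomClass.mono l hs

end Domination

section Grothendieck

lemma exists_orthonormal_family {V : Type*} [AddCommGroup V] [Module ℝ V] [FiniteDimensional ℝ V]
    (B : LinearMap.BilinForm ℝ V) (hsymm : ∀ v w, B v w = B w v) (hpos : ∀ v ≠ 0, 0 < B v v) :
    ∃ e : Fin (Module.finrank ℝ V) → V, ∀ i j, B (e i) (e j) = if i = j then 1 else 0 := by
  let core : InnerProductSpace.Core ℝ V :=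
    { inner := fun v w => B v w
      conj_inner_symm := fun v w => hsymm w v
      re_inner_nonneg := fun v => by
        obtain rfl | hv := eq_or_ne v 0
        · simp
        · exact (hpos v hv).le
      add_left := fun u v w => by simp
      smul_left := fun v w r => by simp
      definite := fun v hv => by
        by_contra hne
        exact (hpos v hne).ne' hv }
  let : NormedAddCommGroup V := core.toNormedAddCommGroup
  let : InnerProductSpace ℝ V := .ofCore core.toCore
  exact ⟨stdOrthonormalBasis ℝ V, orthonormal_iff_ite.1 (stdOrthonormalBasis ℝ V).orthonormal⟩

variable {Ω : Type*} [MeasurableSpace Ω] {μ : Measure Ω} {ι : Type*} [Fintype ι]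
  {e : ι → Lp ℝ ∞ μ} {C : ℝ}

lemma ae_forall_sq_sum_le (h : ∀ a : ι → ℝ, ‖∑ i, a i • e i‖ ^ 2 ≤ C * ∑ i, a i ^ 2) :
    ∀ᵐ x ∂μ, ∀ a : ι → ℝ, (∑ i, a i * e i x) ^ 2 ≤ C * ∑ i, a i ^ 2 := by
  have hrat : ∀ᵐ x ∂μ, ∀ q : ι → ℚ, (∑ i, (q i : ℝ) * e i x) ^ 2 ≤ C * ∑ i, (q i : ℝ) ^ 2 := by
    refine ae_all_iff.2 fun q => ?_
    filter_upwards [linfty_ae_abs_le_norm (∑ i, (q i : ℝ) • e i),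
      Lp.coeFn_fun_finsetSum Finset.univ fun i => (q i : ℝ) • e i,
      ae_all_iff.2 fun i => Lp.coeFn_smul (q i : ℝ) (e i)] with x hle hsum hsmul
    simp only [hsum, hsmul, Pi.smul_apply, smul_eq_mul] at hle
    exact (sq_le_sq' (neg_le_of_abs_le hle) (le_of_abs_le hle)).trans (h _)
  filter_upwards [hrat] with x hx a
  have hdense : DenseRange (Pi.map fun (_ : ι) (q : ℚ) => (q : ℝ)) :=
    DenseRange.piMap fun _ => Rat.denseRange_cast
  exact hdense.induction_on a (isClosed_le (by fun_prop) (by fun_prop)) hx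

lemma sum_linftyMul_self_le (hC : 0 ≤ C)
    (h : ∀ a : ι → ℝ, ‖∑ i, a i • e i‖ ^ 2 ≤ C * ∑ i, a i ^ 2) :
    ∑ i, linftyMul (e i) (e i) ≤ C • linftyInd ⊤ := by
  rw [← Lp.coeFn_le]
  filter_upwards [ae_forall_sq_sum_le h, Lp.coeFn_smul C (linftyInd (μ := μ) ⊤),
    coeFn_linftyInd (μ := μ) ⊤, Lp.coeFn_fun_finsetSum Finset.univ fun i => linftyMul (e i) (e i),
    ae_all_iff.2 fun i => coeFn_linftyMul (e i) (e i)] with x hx hsmul htop hsum hmul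
  have hself := hx fun i => e i x
  simp only [hsum, hmul, hsmul, Pi.smul_apply, htop, MeasurableSet.coe_top, top_eq_univ,
    indicator_univ, Pi.one_apply, smul_eq_mul, mul_one, ← sq] at hself ⊢
  by_contra! hlt
  nlinarith

theorem finrank_le_of_norm_sq_le {l : Lp ℝ ∞ μ →ₚ[ℝ] ℝ} (hC : 0 ≤ C) {Z : Submodule ℝ (Lp ℝ ∞ μ)}
    [FiniteDimensional ℝ Z] (hZ : ∀ y ∈ Z, ‖y‖ ^ 2 ≤ C * l (linftyMul y y)) :
    Module.finrank ℝ Z ≤ C * l (linftyInd ⊤) := by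
  let B : LinearMap.BilinForm ℝ Z := LinearMap.mk₂ ℝ (fun y z => l (linftyMul y z))
    (fun _ _ _ => by simp) (fun _ _ _ => by simp) (fun _ _ _ => by simp) (fun _ _ _ => by simp)
  have hpos (y : Z) (hy : y ≠ 0) : 0 < B y y := by
    have hnorm : 0 < C * l (linftyMul y y) :=
      (pow_pos (norm_pos_iff.2 (by simpa using hy)) 2).trans_le (hZ y y.2)
    exact pos_of_mul_pos_right hnorm hC
  obtain ⟨e, he⟩ := exists_orthonormal_family B (fun y z => by
    simp only [B, LinearMap.mk₂_apply, linftyMul_comm]) hpos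
  have hcoef (a : Fin (Module.finrank ℝ Z) → ℝ) :
      ‖∑ i, a i • (e i : Lp ℝ ∞ μ)‖ ^ 2 ≤ C * ∑ i, a i ^ 2 := by
    have hB : B (∑ i, a i • e i) (∑ i, a i • e i) = ∑ i, a i ^ 2 := by
      simp [he, sq]
    rw [← hB]
    simpa [B] using hZ _ (∑ i, a i • e i).2
  calc (Module.finrank ℝ Z : ℝ) = ∑ i, B (e i) (e i) := by simp [he]
    _ = l (∑ i, linftyMul (e i : Lp ℝ ∞ μ) (e i)) := (map_sum l _ _).symm
    _ ≤ l (C • linftyInd ⊤) := OrderHomClass.mono l (sum_linftyMul_self_le hC hcoef)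
    _ = C * l (linftyInd ⊤) := by rw [map_smul, smul_eq_mul]

theorem finiteDimensional_of_norm_sq_le {l : Lp ℝ ∞ μ →ₚ[ℝ] ℝ} (hC : 0 ≤ C)
    {Y : Submodule ℝ (Lp ℝ ∞ μ)} (hY : ∀ y ∈ Y, ‖y‖ ^ 2 ≤ C * l (linftyMul y y)) :
    FiniteDimensional ℝ Y := by
  have hrank (s : Finset Y) (hs : LinearIndependent ℝ fun i : s => (i : Y)) :
      s.card ≤ ⌊C * l (linftyInd ⊤)⌋₊ := by
    have hindep : LinearIndependent ℝ fun i : s => ((i : Y) : Lp ℝ ∞ μ) :=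
      hs.map' Y.subtype Y.ker_subtype
    have hspan : Submodule.span ℝ (range fun i : s => ((i : Y) : Lp ℝ ∞ μ)) ≤ Y :=
      Submodule.span_le.2 (range_subset_iff.2 fun i => i.1.2)
    have hfin := FiniteDimensional.span_of_finite ℝ
      (finite_range fun i : s => ((i : Y) : Lp ℝ ∞ μ))
    rw [← Fintype.card_coe, ← finrank_span_eq_card hindep]
    exact Nat.le_floor (finrank_le_of_norm_sq_le hC fun y hy => hY y (hspan hy))
  exact Module.rank_lt_aleph0_iff.1 ((rank_le hrank).trans_lt Cardinal.natCast_lt_aleph0)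

end Grothendieck

theorem statement6_general {Ω : Type*} [MeasurableSpace Ω] {μ : Measure Ω} {X : Type*}
    [NormedAddCommGroup X] [NormedSpace ℝ X] [TopologicalSpace.SeparableSpace X]
    (T : Lp ℝ ∞ μ →L[ℝ] X) : StrictlySingular T := by
  rintro Y - hY ⟨c, hc, hbelow⟩
  obtain ⟨l, C, hC, hdom⟩ :=
    exists_positiveLinearMap_norm_sq_le (isExhaustive_semivariation T) hc
  exact hY (finiteDimensional_of_norm_sq_le hC fun y hy => hdom y (hbelow y hy))

/-- Every bounded operator from `L_∞[0,1]` into a separable Banach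
space is strictly singular. -/
theorem statement6 {X : Type*} [NormedAddCommGroup X] [NormedSpace ℝ X] [CompleteSpace X]
    [TopologicalSpace.SeparableSpace X]
    (T : Lp ℝ ∞ μ01 →L[ℝ] X) :
    StrictlySingular T :=
  statement6_general T
end

section
/- Let X be a Banach space with cotype q ∈ [2, ∞). There is a constant K (depending only on X and q) such that for every bounded operator T: L_∞[0,1] → X and every n, the n-th Bernstein number satisfies b_n(T) ≤ K ‖T‖ n^{-1/q}. In particular every bounded operator from L_∞ into a space of finite cotype is super strictly singular. -/
open MeasureTheory ENNReal Filter Set Finset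

/-- The `n`-th Bernstein number of an operator:
`b_n(T) = sup { inf { ‖Tx‖/‖x‖ : 0 ≠ x ∈ F } : F ⊆ E, dim F = n }`. -/
noncomputable def bernsteinNumber {E X : Type*} [NormedAddCommGroup E] [NormedSpace ℝ E]
    [NormedAddCommGroup X] [NormedSpace ℝ X] (T : E →L[ℝ] X) (n : ℕ) : ℝ :=
  sSup {r : ℝ | ∃ F : Submodule ℝ E, Module.finrank ℝ F = n ∧
    r = sInf {s : ℝ | ∃ x ∈ F, x ≠ 0 ∧ s = ‖T x‖ / ‖x‖}}

/-- An operator is super strictly singular iff its Bernstein numbers tend to zero. -/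
noncomputable def SuperStrictlySingular {E X : Type*} [NormedAddCommGroup E]
    [NormedSpace ℝ E] [NormedAddCommGroup X] [NormedSpace ℝ X] (T : E →L[ℝ] X) : Prop :=
  Tendsto (fun n => bernsteinNumber T n) atTop (nhds 0)

/-- `X` has cotype `q` with constant `C`, where the Rademacher average is expressed as an
average over all choices of signs. -/
def HasCotype (q : ℝ) (C : ℝ) (X : Type*) [NormedAddCommGroup X] [NormedSpace ℝ X] : Prop :=
  ∀ (m : ℕ) (x : Fin m → X),
    (∑ i, ‖x i‖ ^ q) ^ (1 / q) ≤
      C * (((2 : ℝ) ^ m)⁻¹ *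
        ∑ ε : Fin m → Bool, ‖∑ i, (if ε i then (1:ℝ) else -1) • x i‖ ^ 2) ^ ((1:ℝ) / 2)

/-!
By a theorem of Maurey, every operator from `L_∞` into a space of cotype `q` is `(q, 2)`-summing.
By cotype, an operator `S` on `C(K)` is `(q, 1)`-summing. If functions `h l` of modulus at most one
have an average modulus at most `τ`, then inserting them into an almost extremal family for the
`(q, 1)`-summing norm `π` of `S` shows that the average of `‖S (h l)‖ ^ q` is at most `q τ π ^ q`
(Pisier). If `∑ xᵢ² ≤ 1`, then the signed sums `∑ εᵢ xᵢ` are subgaussian, so the parts of them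
between the levels `j` and `j + 1` have average modulus of order `exp (-j)`. Summing the resulting
bounds over `j` controls the average of `‖∑ εᵢ S xᵢ‖ ^ q`, and cotype gives the `(q, 2)`-summing
property. A finite family in `L_∞` with weak `ℓ₂` norm at most one takes its values in a Euclidean
ball, which reduces `L_∞` to `C(K)`.

An `n`-dimensional normed space contains `n / 2` vectors of norm at least `1 / 2` whose weak `ℓ₂`
norm is at most one (Dvoretzky–Rogers): they are the images of orthonormal vectors under the
contraction of maximal volume from Euclidean space. If `‖T x‖ ≥ r ‖x‖` on that space, then
`(n / 2) (r / 2) ^ q` is bounded by the `q`-th power of the `(q, 2)`-summing norm of `T`.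
-/

section DvoretzkyRogers

open Module

lemma det_id_add_smul_of_isProj {R M : Type*} [Field R] [AddCommGroup M] [Module R M]
    [FiniteDimensional R M] {W : Submodule R M} {p : M →ₗ[R] M} (hp : LinearMap.IsProj W p)
    (t : R) : LinearMap.det (LinearMap.id + t • p) = (1 + t) ^ finrank R W := by
  let e := Submodule.prodEquivOfIsCompl W p.ker hp.isCompl
  have hconj : LinearMap.id + t • p =
      e.toLinearMap ∘ₗ (((1 + t) • LinearMap.id).prodMap LinearMap.id) ∘ₗ e.symm.toLinearMap := by
    refine LinearMap.ext fun x => ?_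
    obtain ⟨⟨w, z⟩, rfl⟩ := e.surjective x
    have hpe : p (e (w, z)) = w := by simp [e, hp.map_id w w.2]
    simp only [LinearMap.add_apply, LinearMap.smul_apply, LinearMap.id_apply, hpe,
      LinearMap.comp_apply, LinearEquiv.coe_coe, LinearEquiv.symm_apply_apply,
      LinearMap.prodMap_apply]
    simp only [e, Submodule.coe_prodEquivOfIsCompl', add_smul, one_smul,
      Submodule.coe_add, Submodule.coe_smul]
    abel
  rw [hconj, LinearMap.det_conj, LinearMap.det_prodMap, LinearMap.det_smul]
  simp

/-- `u` maximizes the volume `|det (e ∘ u)|`, where `e : F ≃ V` is an arbitrary isomorphism. -/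
lemma exists_contraction_abs_det_le_norm_comp_pow {V F : Type*} [NormedAddCommGroup V]
    [NormedSpace ℝ V] [FiniteDimensional ℝ V] [NormedAddCommGroup F] [NormedSpace ℝ F]
    [FiniteDimensional ℝ F] (hVF : finrank ℝ V = finrank ℝ F) :
    ∃ u : V →L[ℝ] F, ‖u‖ ≤ 1 ∧ ∀ A : V →L[ℝ] V, |A.det| ≤ ‖u ∘L A‖ ^ finrank ℝ V := by
  let e : F ≃L[ℝ] V := ContinuousLinearEquiv.ofFinrankEq hVF.symm
  let vol (v : V →L[ℝ] F) : ℝ := |((e : F →L[ℝ] V) ∘L v).det|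
  have vol_continuous : Continuous vol :=
    continuous_abs.comp <| ContinuousLinearMap.continuous_det.comp
      (ContinuousLinearMap.compL ℝ V F V (e : F →L[ℝ] V)).continuous
  have vol_smul (c : ℝ) (v : V →L[ℝ] F) : vol (c • v) = |c| ^ finrank ℝ V * vol v := by
    simp only [vol, ContinuousLinearMap.comp_smul, ContinuousLinearMap.det,
      ContinuousLinearMap.toLinearMap_smul, LinearMap.det_smul, abs_mul, abs_pow]
  have vol_comp (v : V →L[ℝ] F) (A : V →L[ℝ] V) : vol (v ∘L A) = vol v * |A.det| := by
    simp only [vol, ContinuousLinearMap.det, ← abs_mul, ← LinearMap.det_comp]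
    rfl
  have : ProperSpace (V →L[ℝ] F) := FiniteDimensional.proper ℝ _
  obtain ⟨u, hu, u_max⟩ := (isCompact_closedBall (0 : V →L[ℝ] F) 1).exists_isMaxOn
    ⟨0, by simp⟩ vol_continuous.continuousOn
  have vol_le (v : V →L[ℝ] F) : vol v ≤ ‖v‖ ^ finrank ℝ V * vol u := by
    have hv : v = ‖v‖ • ‖v‖⁻¹ • v := by
      rcases eq_or_ne v 0 with rfl | hv
      · simp
      · rw [smul_inv_smul₀ (norm_ne_zero_iff.2 hv)]
    have h_unit : vol (‖v‖⁻¹ • v) ≤ vol u :=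
      u_max (by simpa [norm_smul] using inv_mul_le_one)
    calc vol v = ‖v‖ ^ finrank ℝ V * vol (‖v‖⁻¹ • v) := by
          conv_lhs => rw [hv, vol_smul, abs_norm]
      _ ≤ ‖v‖ ^ finrank ℝ V * vol u := by gcongr
  have vol_pos : 0 < vol u := by
    have h_symm : vol (e.symm : V →L[ℝ] F) = 1 := by simp [vol, ContinuousLinearMap.det]
    have := h_symm ▸ vol_le (e.symm : V →L[ℝ] F)
    exact pos_of_mul_pos_right (one_pos.trans_le this) (by positivity)
  refine ⟨u, by simpa using hu, fun A => le_of_mul_le_mul_left ?_ vol_pos⟩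
  rw [← vol_comp, mul_comm (vol u)]
  exact vol_le _

variable {V F : Type*} [NormedAddCommGroup V] [InnerProductSpace ℝ V] [FiniteDimensional ℝ V]
  [NormedAddCommGroup F] [NormedSpace ℝ F] {u : V →L[ℝ] F}

lemma one_add_pow_finrank_le_of_abs_det_le (hu : ‖u‖ ≤ 1)
    (hdet : ∀ A : V →L[ℝ] V, |A.det| ≤ ‖u ∘L A‖ ^ finrank ℝ V) {W : Submodule ℝ V} {c t : ℝ}
    (hc : 0 ≤ c) (hW : ∀ w ∈ W, ‖u w‖ ≤ c * ‖w‖) (ht : 0 < t) :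
    (1 + t) ^ finrank ℝ W ≤ (1 + t * c) ^ finrank ℝ V := by
  let A : V →L[ℝ] V := .id ℝ V + t • W.starProjection
  have hA : A.det = (1 + t) ^ finrank ℝ W :=
    det_id_add_smul_of_isProj
      ⟨W.starProjection_apply_mem, fun _ => Submodule.starProjection_eq_self_iff.2⟩ t
  have huA : ‖u ∘L A‖ ≤ 1 + t * c := by
    refine ContinuousLinearMap.opNorm_le_bound _ (by positivity) fun y => ?_
    calc ‖u (y + t • W.starProjection y)‖
        ≤ ‖u y‖ + t * ‖u (W.starProjection y)‖ := by
          rw [map_add, map_smul]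
          exact (norm_add_le _ _).trans_eq (by rw [norm_smul, Real.norm_of_nonneg ht.le])
      _ ≤ 1 * ‖y‖ + t * (c * ‖y‖) := by
          gcongr
          · exact u.le_of_opNorm_le hu y
          · exact (hW _ (W.starProjection_apply_mem y)).trans
              (by gcongr; exact W.norm_starProjection_apply_le y)
      _ = (1 + t * c) * ‖y‖ := by ring
  calc (1 + t) ^ finrank ℝ W = |A.det| := by rw [hA, abs_of_pos (by positivity)]
    _ ≤ ‖u ∘L A‖ ^ finrank ℝ V := hdet A
    _ ≤ (1 + t * c) ^ finrank ℝ V := by gcongr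

lemma finrank_le_finrank_mul_of_abs_det_le (hu : ‖u‖ ≤ 1)
    (hdet : ∀ A : V →L[ℝ] V, |A.det| ≤ ‖u ∘L A‖ ^ finrank ℝ V) {W : Submodule ℝ V} {c : ℝ}
    (hc : 0 ≤ c) (hW : ∀ w ∈ W, ‖u w‖ ≤ c * ‖w‖) :
    (finrank ℝ W : ℝ) ≤ finrank ℝ V * c := by
  have h_exp {t : ℝ} (ht : 0 < t) : 1 + finrank ℝ W * t ≤ Real.exp (t * (finrank ℝ V * c)) := by
    calc 1 + finrank ℝ W * t ≤ (1 + t) ^ finrank ℝ W :=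
          one_add_mul_le_pow (by linarith) _
      _ ≤ (1 + t * c) ^ finrank ℝ V :=
          one_add_pow_finrank_le_of_abs_det_le hu hdet hc hW ht
      _ ≤ Real.exp (t * c) ^ finrank ℝ V := by
          gcongr; linarith [Real.add_one_le_exp (t * c)]
      _ = Real.exp (t * (finrank ℝ V * c)) := by rw [← Real.exp_nat_mul]; ring_nf
  have h_deriv :
      HasDerivAt (fun t : ℝ => Real.exp (t * (finrank ℝ V * c))) (finrank ℝ V * c) 0 := by
    simpa using ((hasDerivAt_id (0 : ℝ)).mul_const (finrank ℝ V * c)).exp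
  have h_slope := h_deriv.tendsto_slope_zero_right
  refine ge_of_tendsto h_slope (eventually_mem_nhdsWithin.mono fun t (ht : 0 < t) => ?_)
  simp only [zero_add, zero_mul, Real.exp_zero, smul_eq_mul]
  rw [le_inv_mul_iff₀ ht]
  linarith [h_exp ht]

lemma exists_norm_eq_one_finrank_le_of_abs_det_le (hu : ‖u‖ ≤ 1)
    (hdet : ∀ A : V →L[ℝ] V, |A.det| ≤ ‖u ∘L A‖ ^ finrank ℝ V) {W : Submodule ℝ V}
    (hW : 0 < finrank ℝ W) :
    ∃ w ∈ W, ‖w‖ = 1 ∧ (finrank ℝ W : ℝ) ≤ finrank ℝ V * ‖u w‖ := by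
  have : Nontrivial W := Module.finrank_pos_iff.1 hW
  obtain ⟨w, hw, w_max⟩ := (isCompact_sphere (0 : W) 1).exists_isMaxOn
    (NormedSpace.sphere_nonempty.2 zero_le_one)
    (u.continuous.comp continuous_subtype_val).norm.continuousOn
  refine ⟨w, w.2, by simpa using hw,
    finrank_le_finrank_mul_of_abs_det_le hu hdet (norm_nonneg _) fun v hv => ?_⟩
  rcases eq_or_ne v 0 with rfl | hv0
  · simp
  have h_unit : ‖u (‖v‖⁻¹ • v)‖ ≤ ‖u w‖ :=
    w_max (a := ‖v‖⁻¹ • ⟨v, hv⟩) (by simp [norm_smul, hv0])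
  rwa [map_smul, norm_smul, norm_inv, norm_norm, inv_mul_le_iff₀ (norm_pos_iff.2 hv0),
    mul_comm] at h_unit

lemma exists_orthonormal_of_abs_det_le (hu : ‖u‖ ≤ 1)
    (hdet : ∀ A : V →L[ℝ] V, |A.det| ≤ ‖u ∘L A‖ ^ finrank ℝ V) {k : ℕ} {W : Submodule ℝ V}
    (hW : finrank ℝ W = k) :
    ∃ z : Fin k → V, Orthonormal ℝ z ∧ (∀ j, z j ∈ W) ∧
      ∀ j, (k : ℝ) - j ≤ finrank ℝ V * ‖u (z j)‖ := by
  induction k generalizing W with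
  | zero => exact ⟨Fin.elim0, ⟨Fin.rec0, Fin.rec0⟩, Fin.rec0, Fin.rec0⟩
  | succ k ih =>
    obtain ⟨w, hwW, hw, huw⟩ :=
      exists_norm_eq_one_finrank_le_of_abs_det_le hu hdet (by omega : 0 < finrank ℝ W)
    have hw0 : w ≠ 0 := norm_ne_zero_iff.1 (hw ▸ one_ne_zero)
    have hW' : finrank ℝ ((ℝ ∙ w)ᗮ ⊓ W : Submodule ℝ V) = k :=
      Submodule.finrank_add_inf_finrank_orthogonal'
        ((Submodule.span_singleton_le_iff_mem w W).2 hwW)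
        (by rw [finrank_span_singleton hw0, hW, add_comm])
    obtain ⟨z, hz, hzW, huz⟩ := ih hW'
    refine ⟨Matrix.vecCons w z, orthonormal_vecCons_iff.2
      ⟨hw, fun j => Submodule.mem_orthogonal_singleton_iff_inner_right.1 (hzW j).1, hz⟩, ?_, ?_⟩
    · exact Fin.cases hwW fun j => (hzW j).2
    · refine Fin.cases ?_ fun j => ?_
      · simpa [hW] using huw
      · simpa using huz j

theorem dvoretzky_rogers {n : ℕ} [FiniteDimensional ℝ F] (hF : finrank ℝ F = n) :
    ∃ x : Fin n → F, (∀ j, (n : ℝ) - j ≤ n * ‖x j‖) ∧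
      ∀ a : EuclideanSpace ℝ (Fin n), ‖∑ j, a j • x j‖ ≤ ‖a‖ := by
  have hV : finrank ℝ (EuclideanSpace ℝ (Fin n)) = n := finrank_euclideanSpace_fin
  obtain ⟨u, hu, hdet⟩ := exists_contraction_abs_det_le_norm_comp_pow (hV.trans hF.symm)
  obtain ⟨z, hz, -, huz⟩ := exists_orthonormal_of_abs_det_le hu hdet (finrank_top ℝ _ |>.trans hV)
  refine ⟨fun j => u (z j), fun j => by simpa only [hV] using huz j, fun a => ?_⟩
  have h_norm : ‖∑ j, a j • z j‖ = ‖a‖ := by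
    rw [← sq_eq_sq₀ (norm_nonneg _) (norm_nonneg _), ← real_inner_self_eq_norm_sq, hz.inner_sum,
      EuclideanSpace.norm_sq_eq]
    simp [sq]
  calc ‖∑ j, a j • u (z j)‖ = ‖u (∑ j, a j • z j)‖ := by simp only [map_sum, map_smul]
    _ ≤ 1 * ‖∑ j, a j • z j‖ := u.le_of_opNorm_le hu _
    _ = ‖a‖ := by rw [one_mul, h_norm]

end DvoretzkyRogers

section SignedSum

variable {E : Type*} [AddCommGroup E] [Module ℝ E] {k : ℕ}

/-- The signed sum `∑ εᵢ xᵢ`, where the signs `εᵢ = ±1` are encoded by booleans as in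
`HasCotype`. -/
def signedSum (x : Fin k → E) (ε : Fin k → Bool) : E :=
  ∑ i, (if ε i then (1 : ℝ) else -1) • x i

lemma map_signedSum {F : Type*} [AddCommGroup F] [Module ℝ F] {L : Type*} [FunLike L E F]
    [LinearMapClass L ℝ E F] (φ : L) (x : Fin k → E) (ε : Fin k → Bool) :
    φ (signedSum x ε) = signedSum (fun i => φ (x i)) ε := by
  simp only [signedSum, map_sum, map_smul]

lemma norm_signedSum_le {E : Type*} [SeminormedAddCommGroup E] [NormedSpace ℝ E] (x : Fin k → E)
    (ε : Fin k → Bool) : ‖signedSum x ε‖ ≤ ∑ i, ‖x i‖ := by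
  refine norm_sum_le_of_le _ fun i _ => ?_
  split_ifs <;> simp

lemma signedSum_apply {K : Type*} [TopologicalSpace K] (f : Fin k → C(K, ℝ)) (ε : Fin k → Bool)
    (t : K) : signedSum f ε t = signedSum (fun i => f i t) ε := by
  simp only [signedSum, ContinuousMap.sum_apply, ContinuousMap.smul_apply]

lemma sum_exp_signedSum (a : Fin k → ℝ) :
    ∑ ε, Real.exp (signedSum a ε) = ∏ i, (2 * Real.cosh (a i)) := by
  simp only [signedSum, Real.exp_sum]
  rw [← Fintype.piFinset_univ, ← Finset.prod_univ_sum (fun _ : Fin k => (Finset.univ : Finset Bool))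
    fun i b => Real.exp ((if b then (1 : ℝ) else -1) • a i)]
  refine Finset.prod_congr rfl fun i _ => ?_
  simp [Real.cosh_eq, mul_div_cancel₀]

lemma average_cosh_signedSum_le (a : Fin k → ℝ) :
    ∑ ε : Fin k → Bool, ((2 : ℝ) ^ k)⁻¹ * Real.cosh (signedSum a ε) ≤
      Real.exp ((∑ i, a i ^ 2) / 2) := by
  have h_neg : ∑ ε, Real.exp (-signedSum a ε) = ∏ i, (2 * Real.cosh (a i)) := by
    simpa [signedSum] using sum_exp_signedSum (fun i => -a i)
  calc ∑ ε : Fin k → Bool, ((2 : ℝ) ^ k)⁻¹ * Real.cosh (signedSum a ε)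
      = ∏ i, Real.cosh (a i) := by
        simp only [Real.cosh_eq (signedSum a _), ← Finset.mul_sum, ← Finset.sum_div,
          Finset.sum_add_distrib, sum_exp_signedSum, h_neg, add_self_div_two,
          Finset.prod_mul_distrib, Finset.prod_const, Finset.card_univ, Fintype.card_fin]
        rw [inv_mul_cancel_left₀ (by positivity)]
    _ ≤ ∏ i, Real.exp (a i ^ 2 / 2) :=
        Finset.prod_le_prod (fun i _ => (Real.cosh_pos _).le)
          fun i _ => Real.cosh_le_exp_half_sq _
    _ = Real.exp ((∑ i, a i ^ 2) / 2) := by rw [← Real.exp_sum, Finset.sum_div]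

lemma sum_inv_two_pow_eq_one (k : ℕ) : ∑ _ε : Fin k → Bool, ((2 : ℝ) ^ k)⁻¹ = 1 := by
  simp

lemma HasCotype.sum_norm_rpow_le {X : Type*} [NormedAddCommGroup X] [NormedSpace ℝ X] {q C : ℝ}
    (hcot : HasCotype q C X) (hq : 2 ≤ q) (hC : 0 ≤ C) (x : Fin k → X) :
    ∑ i, ‖x i‖ ^ q ≤ C ^ q * ∑ ε, ((2 : ℝ) ^ k)⁻¹ * ‖signedSum x ε‖ ^ q := by
  have hq0 : 0 < q := by linarith
  have h_power_mean : (∑ ε, ((2 : ℝ) ^ k)⁻¹ * ‖signedSum x ε‖ ^ 2) ^ (q / 2) ≤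
      ∑ ε, ((2 : ℝ) ^ k)⁻¹ * ‖signedSum x ε‖ ^ q := by
    refine (Real.rpow_arith_mean_le_arith_mean_rpow _ _ _ (fun _ _ => by positivity)
      (sum_inv_two_pow_eq_one k) (fun _ _ => by positivity) (by linarith)).trans_eq ?_
    refine Finset.sum_congr rfl fun ε _ => ?_
    rw [← Real.rpow_natCast_mul (norm_nonneg _), Nat.cast_ofNat, mul_div_cancel₀ q two_ne_zero]
  calc ∑ i, ‖x i‖ ^ q = ((∑ i, ‖x i‖ ^ q) ^ (1 / q)) ^ q := by
        rw [one_div, Real.rpow_inv_rpow (by positivity) hq0.ne']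
    _ ≤ (C * (∑ ε, ((2 : ℝ) ^ k)⁻¹ * ‖signedSum x ε‖ ^ 2) ^ ((1 : ℝ) / 2)) ^ q := by
        gcongr
        simpa only [signedSum, Finset.mul_sum] using hcot k x
    _ = C ^ q * (∑ ε, ((2 : ℝ) ^ k)⁻¹ * ‖signedSum x ε‖ ^ 2) ^ (q / 2) := by
        rw [Real.mul_rpow hC (by positivity), ← Real.rpow_mul (by positivity), one_div_mul_eq_div]
    _ ≤ C ^ q * ∑ ε, ((2 : ℝ) ^ k)⁻¹ * ‖signedSum x ε‖ ^ q := by gcongr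

end SignedSum

section Minkowski

lemma rpow_sum_mul_norm_sum_rpow_le {ι κ X : Type*} [Fintype ι] [NormedAddCommGroup X]
    [NormedSpace ℝ X] {q : ℝ} (hq : 1 ≤ q) {p : ι → ℝ} (hp : ∀ l, 0 ≤ p l) (s : Finset κ)
    (v : κ → ι → X) :
    (∑ l, p l * ‖∑ j ∈ s, v j l‖ ^ q) ^ (1 / q) ≤
      ∑ j ∈ s, (∑ l, p l * ‖v j l‖ ^ q) ^ (1 / q) := by
  have hq0 : 0 < q := by linarith
  have : Fact (1 ≤ ENNReal.ofReal q) := ⟨by simpa using hq⟩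
  have h_toReal : (ENNReal.ofReal q).toReal = q := ENNReal.toReal_ofReal hq0.le
  let scaled (w : ι → X) : PiLp (ENNReal.ofReal q) (fun _ : ι => X) :=
    WithLp.toLp _ fun l => p l ^ (1 / q) • w l
  have norm_scaled (w : ι → X) : ‖scaled w‖ = (∑ l, p l * ‖w l‖ ^ q) ^ (1 / q) := by
    rw [PiLp.norm_eq_sum (by rwa [h_toReal]), h_toReal]
    congr! 2 with l
    rw [norm_smul, Real.norm_of_nonneg (Real.rpow_nonneg (hp l) _),
      Real.mul_rpow (Real.rpow_nonneg (hp l) _) (norm_nonneg _), ← Real.rpow_mul (hp l),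
      one_div_mul_cancel hq0.ne', Real.rpow_one]
  have scaled_sum : scaled (fun l => ∑ j ∈ s, v j l) = ∑ j ∈ s, scaled (v j) := by
    ext l
    simp [scaled, Finset.smul_sum]
  simpa only [← norm_scaled, scaled_sum] using norm_sum_le s fun j => scaled (v j)

lemma add_rpow_le_of_mem_Ioo {q a b τ : ℝ} (hq : 1 ≤ q) (ha : 0 ≤ a) (hb : 0 ≤ b)
    (hτ : τ ∈ Set.Ioo (0 : ℝ) 1) :
    (a + b) ^ q ≤ (1 - τ) ^ (1 - q) * a ^ q + τ ^ (1 - q) * b ^ q := by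
  obtain ⟨hτ0, hτ1⟩ := hτ
  have hτ1' : 0 < 1 - τ := by linarith
  have h_convex := (convexOn_rpow hq).2 (x := a / (1 - τ)) (y := b / τ)
    (Set.mem_Ici.2 (by positivity)) (Set.mem_Ici.2 (by positivity)) hτ1'.le hτ0.le (by ring)
  have h_rescale {c s : ℝ} (hc : 0 ≤ c) (hs : 0 < s) : s * (c / s) ^ q = s ^ (1 - q) * c ^ q := by
    rw [Real.div_rpow hc hs.le, Real.rpow_sub hs, Real.rpow_one]
    ring
  simpa only [smul_eq_mul, h_rescale ha hτ1', h_rescale hb hτ0, mul_div_cancel₀ _ hτ1'.ne',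
    mul_div_cancel₀ _ hτ0.ne'] using h_convex

lemma le_mul_of_le_one_sub_rpow_mul_sub_add {q τ A P : ℝ} (hq : 1 ≤ q) (hτ : τ ∈ Set.Ioo (0 : ℝ) 1)
    (hA : 0 ≤ A) (h : A ≤ (1 - τ) ^ (1 - q) * (A - P) + τ * A) : P ≤ q * τ * A := by
  have hτ1 : 0 < 1 - τ := sub_pos.2 hτ.2
  have h_pow : (1 - τ) ^ q * A ≤ A - P := by
    rw [Real.rpow_sub hτ1, Real.rpow_one] at h
    have h_quotient : (1 - τ) * A ≤ (1 - τ) * ((A - P) / (1 - τ) ^ q) := by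
      rw [← mul_div_assoc, mul_div_right_comm]
      linarith
    rwa [mul_le_mul_iff_right₀ hτ1, le_div_iff₀ (by positivity), mul_comm] at h_quotient
  have h_bernoulli : 1 - q * τ ≤ (1 - τ) ^ q := by
    have := one_add_mul_self_le_rpow_one_add (s := -τ) (by linarith) hq
    rwa [mul_neg, ← sub_eq_add_neg, ← sub_eq_add_neg] at this
  nlinarith [mul_le_mul_of_nonneg_right h_bernoulli hA]

end Minkowski

section ContinuousFunctions

variable {K X : Type*} [TopologicalSpace K] [NormedAddCommGroup X] [NormedSpace ℝ X]
  {S : C(K, ℝ) →L[ℝ] X} {q A : ℝ} {m : ℕ}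

/-- The sums whose supremum is the `q`-th power of the `(q, 1)`-summing norm of `S`; in `C(K)` the
condition `∑ |fᵢ| ≤ 1` says that the weak `ℓ₁` norm of `(fᵢ)` is at most one. -/
def summingPowers (q : ℝ) (S : C(K, ℝ) →L[ℝ] X) : Set ℝ :=
  {a | ∃ (m : ℕ) (f : Fin m → C(K, ℝ)), (∀ t, ∑ i, |f i t| ≤ 1) ∧ a = ∑ i, ‖S (f i)‖ ^ q}

lemma summingPowers_nonempty : (summingPowers q S).Nonempty :=
  ⟨_, 0, Fin.elim0, by simp, rfl⟩

section Averages

variable {ι : Type*} [Fintype ι] {p : ι → ℝ} {h : ι → C(K, ℝ)} {f : Fin m → C(K, ℝ)} {τ : ℝ}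

lemma sum_norm_mul_rpow_le (hA : A ∈ upperBounds (summingPowers q S)) (hτ : 0 < τ) {H : C(K, ℝ)}
    (hH : ∀ t, |H t| ≤ τ) (hf : ∀ t, ∑ i, |f i t| ≤ 1) :
    ∑ i, ‖S (f i * H)‖ ^ q ≤ τ ^ q * A := by
  have h_weak (t : K) : ∑ i, |(τ⁻¹ • (f i * H)) t| ≤ 1 := by
    simp only [ContinuousMap.smul_apply, ContinuousMap.mul_apply, smul_eq_mul, abs_mul,
      abs_inv, abs_of_pos hτ, ← Finset.mul_sum, ← Finset.sum_mul]
    rw [inv_mul_le_iff₀ hτ, mul_one]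
    exact (mul_le_of_le_one_left (abs_nonneg _) (hf t)).trans (hH t)
  have h_scaled := hA ⟨m, fun i => τ⁻¹ • (f i * H), h_weak, rfl⟩
  simp only [map_smul, norm_smul, norm_inv, Real.norm_of_nonneg hτ.le,
    Real.mul_rpow (inv_nonneg.2 hτ.le) (norm_nonneg _), ← Finset.mul_sum,
    Real.inv_rpow hτ.le] at h_scaled
  rwa [inv_mul_le_iff₀ (by positivity)] at h_scaled

lemma norm_rpow_add_sum_norm_mul_rpow_le (hA : A ∈ upperBounds (summingPowers q S))
    {g : C(K, ℝ)} (hg : ∀ t, |g t| ≤ 1) (hf : ∀ t, ∑ i, |f i t| ≤ 1) :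
    ‖S g‖ ^ q + ∑ i, ‖S (f i * (1 - |g|))‖ ^ q ≤ A := by
  have h_weak (t : K) :
      ∑ i, |(Fin.cons g fun i => f i * (1 - |g|) : Fin (m + 1) → C(K, ℝ)) i t| ≤ 1 := by
    have h_nonneg : 0 ≤ 1 - |g t| := sub_nonneg.2 (hg t)
    simp only [Fin.sum_univ_succ, Fin.cons_zero, Fin.cons_succ, ContinuousMap.mul_apply,
      ContinuousMap.sub_apply, ContinuousMap.one_apply, ContinuousMap.abs_apply, abs_mul,
      abs_of_nonneg h_nonneg, ← Finset.sum_mul]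
    linarith [mul_le_of_le_one_left h_nonneg (hf t)]
  simpa only [Fin.sum_univ_succ, Fin.cons_zero, Fin.cons_succ] using hA ⟨_, _, h_weak, rfl⟩

lemma average_norm_rpow_add_sum_norm_mul_rpow_le (hA : A ∈ upperBounds (summingPowers q S))
    (hq : 1 ≤ q) (hp : ∀ l, 0 ≤ p l) (hp1 : ∑ l, p l = 1) (hh : ∀ l t, |h l t| ≤ 1)
    (hf : ∀ t, ∑ i, |f i t| ≤ 1) :
    ∑ l, p l * ‖S (h l)‖ ^ q + ∑ i, ‖S (f i * (1 - ∑ l, p l • |h l|))‖ ^ q ≤ A := by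
  have h_jensen (i : Fin m) : ‖S (f i * (1 - ∑ l, p l • |h l|))‖ ^ q ≤
      ∑ l, p l * ‖S (f i * (1 - |h l|))‖ ^ q := by
    have h_average : f i * (1 - ∑ l, p l • |h l|) = ∑ l, p l • (f i * (1 - |h l|)) := by
      simp only [mul_sub, mul_one, smul_sub, Finset.sum_sub_distrib, ← Finset.sum_smul, hp1,
        one_smul, Finset.mul_sum, mul_smul_comm]
    calc ‖S (f i * (1 - ∑ l, p l • |h l|))‖ ^ q
        ≤ (∑ l, p l * ‖S (f i * (1 - |h l|))‖) ^ q := by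
          gcongr
          rw [h_average, map_sum]
          refine norm_sum_le_of_le _ fun l _ => ?_
          rw [map_smul, norm_smul, Real.norm_of_nonneg (hp l)]
      _ ≤ ∑ l, p l * ‖S (f i * (1 - |h l|))‖ ^ q :=
          Real.rpow_arith_mean_le_arith_mean_rpow _ _ _ (fun l _ => hp l) hp1
            (fun _ _ => norm_nonneg _) hq
  calc ∑ l, p l * ‖S (h l)‖ ^ q + ∑ i, ‖S (f i * (1 - ∑ l, p l • |h l|))‖ ^ q
      ≤ ∑ l, p l * ‖S (h l)‖ ^ q + ∑ i, ∑ l, p l * ‖S (f i * (1 - |h l|))‖ ^ q := by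
        gcongr with i
        exact h_jensen i
    _ = ∑ l, p l * (‖S (h l)‖ ^ q + ∑ i, ‖S (f i * (1 - |h l|))‖ ^ q) := by
        simp only [mul_add, Finset.sum_add_distrib, Finset.mul_sum]
        rw [Finset.sum_comm (s := (Finset.univ : Finset (Fin m)))]
    _ ≤ ∑ l, p l * A := by
        gcongr with l
        · exact hp l
        · exact norm_rpow_add_sum_norm_mul_rpow_le hA (hh l) hf
    _ = A := by rw [← Finset.sum_mul, hp1, one_mul]

lemma sum_norm_rpow_le_add_mul (hA : A ∈ upperBounds (summingPowers q S)) (hq : 1 ≤ q)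
    (hτ : τ ∈ Set.Ioo (0 : ℝ) 1) {H : C(K, ℝ)} (hH : ∀ t, |H t| ≤ τ)
    (hf : ∀ t, ∑ i, |f i t| ≤ 1) :
    ∑ i, ‖S (f i)‖ ^ q ≤ (1 - τ) ^ (1 - q) * ∑ i, ‖S (f i * (1 - H))‖ ^ q + τ * A := by
  have h_split (i : Fin m) : ‖S (f i)‖ ^ q ≤
      (1 - τ) ^ (1 - q) * ‖S (f i * (1 - H))‖ ^ q + τ ^ (1 - q) * ‖S (f i * H)‖ ^ q := by
    refine le_trans ?_ (add_rpow_le_of_mem_Ioo hq (norm_nonneg _) (norm_nonneg _) hτ)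
    gcongr
    refine le_trans (le_of_eq ?_) (norm_add_le _ _)
    rw [← map_add, ← mul_add, sub_add_cancel, mul_one]
  have hτ0 : 0 < τ := hτ.1
  calc ∑ i, ‖S (f i)‖ ^ q
      ≤ (1 - τ) ^ (1 - q) * ∑ i, ‖S (f i * (1 - H))‖ ^ q
          + τ ^ (1 - q) * ∑ i, ‖S (f i * H)‖ ^ q := by
        rw [Finset.mul_sum, Finset.mul_sum, ← Finset.sum_add_distrib]
        exact Finset.sum_le_sum fun i _ => h_split i
    _ ≤ (1 - τ) ^ (1 - q) * ∑ i, ‖S (f i * (1 - H))‖ ^ q + τ ^ (1 - q) * (τ ^ q * A) := by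
        gcongr
        exact sum_norm_mul_rpow_le hA hτ0 hH hf
    _ = (1 - τ) ^ (1 - q) * ∑ i, ‖S (f i * (1 - H))‖ ^ q + τ * A := by
        rw [← mul_assoc, ← Real.rpow_add hτ0, sub_add_cancel, Real.rpow_one]

/-- An almost extremal family `f` splits as `f * H + f * (1 - H)`, where `H` is the average of the
`|h l|`: the first part is small since `H ≤ τ`, and the second leaves room for every `h l`. -/
lemma average_norm_rpow_le (hA : IsLUB (summingPowers q S) A) (hq : 1 ≤ q) (hp : ∀ l, 0 ≤ p l)
    (hp1 : ∑ l, p l = 1) (hh : ∀ l t, |h l t| ≤ 1) (hτ : 0 < τ)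
    (hmean : ∀ t, ∑ l, p l * |h l t| ≤ τ) :
    ∑ l, p l * ‖S (h l)‖ ^ q ≤ q * τ * A := by
  set P := ∑ l, p l * ‖S (h l)‖ ^ q
  have hP : 0 ≤ P := Finset.sum_nonneg fun l _ => mul_nonneg (hp l) (by positivity)
  have hPA : P ≤ A := by
    simpa using average_norm_rpow_add_sum_norm_mul_rpow_le hA.1 hq hp hp1 hh
      (f := Fin.elim0) (by simp)
  rcases le_or_gt 1 τ with hτ1 | hτ1
  · nlinarith [mul_le_mul hq hτ1 zero_le_one (by linarith)]
  set H : C(K, ℝ) := ∑ l, p l • |h l|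
  have hH (t : K) : |H t| ≤ τ := by
    have hHt : H t = ∑ l, p l * |h l t| := by simp [H, ContinuousMap.sum_apply]
    rw [hHt, abs_of_nonneg (Finset.sum_nonneg fun l _ => mul_nonneg (hp l) (abs_nonneg _))]
    exact hmean t
  refine le_mul_of_le_one_sub_rpow_mul_sub_add hq ⟨hτ, hτ1⟩ (hP.trans hPA) (hA.2 ?_)
  rintro _ ⟨m, f, hf, rfl⟩
  have : 0 < 1 - τ := sub_pos.2 hτ1
  refine (sum_norm_rpow_le_add_mul hA.1 hq ⟨hτ, hτ1⟩ hH hf).trans ?_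
  gcongr
  linarith [average_norm_rpow_add_sum_norm_mul_rpow_le hA.1 hq hp hp1 hh hf]

end Averages

/-- The truncation of the real line to `[-j, j]`. -/
def clip (j : ℕ) : C(ℝ, ℝ) :=
  ⟨fun s => max (-j) (min s j), by fun_prop⟩

lemma clip_zero : clip 0 = 0 := by
  ext s
  simp [clip]

lemma clip_of_abs_le {j : ℕ} {s : ℝ} (hs : |s| ≤ j) : clip j s = s := by
  rw [abs_le] at hs
  simp [clip, hs]

lemma abs_clip_succ_sub_clip_le_one (j : ℕ) (s : ℝ) : |(clip (j + 1) - clip j) s| ≤ 1 := by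
  simp only [clip, ContinuousMap.sub_apply, ContinuousMap.coe_mk, Nat.cast_add_one, abs_le]
  grind

lemma abs_clip_succ_sub_clip_le_cosh (j : ℕ) (s : ℝ) :
    |(clip (j + 1) - clip j) s| ≤ 2 * Real.exp (-j) * Real.cosh s := by
  rcases le_or_gt |s| j with hs | hs
  · have hs' : |s| ≤ (j + 1 : ℕ) := hs.trans (by simp)
    rw [ContinuousMap.sub_apply, clip_of_abs_le hs, clip_of_abs_le hs', sub_self, abs_zero]
    positivity
  calc |(clip (j + 1) - clip j) s| ≤ 1 := abs_clip_succ_sub_clip_le_one j s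
    _ ≤ Real.exp (-j) * Real.exp |s| := by
      rw [← Real.exp_add, Real.one_le_exp_iff]
      linarith
    _ ≤ Real.exp (-j) * (2 * Real.cosh s) := by
      gcongr
      rw [Real.cosh_eq]
      linarith [Real.exp_abs_le s]
    _ = 2 * Real.exp (-j) * Real.cosh s := by ring

lemma average_abs_clip_signedSum_le {a : Fin m → ℝ} (ha : ∑ i, a i ^ 2 ≤ 1) (j : ℕ) :
    ∑ ε : Fin m → Bool, ((2 : ℝ) ^ m)⁻¹ * |(clip (j + 1) - clip j) (signedSum a ε)| ≤
      2 * Real.exp (1 / 2) * Real.exp (-j) := by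
  calc ∑ ε : Fin m → Bool, ((2 : ℝ) ^ m)⁻¹ * |(clip (j + 1) - clip j) (signedSum a ε)|
      ≤ ∑ ε : Fin m → Bool, ((2 : ℝ) ^ m)⁻¹ * (2 * Real.exp (-j) * Real.cosh (signedSum a ε)) := by
        gcongr with ε
        exact abs_clip_succ_sub_clip_le_cosh j _
    _ = 2 * Real.exp (-j) * ∑ ε : Fin m → Bool, ((2 : ℝ) ^ m)⁻¹ * Real.cosh (signedSum a ε) := by
        simp only [mul_left_comm, Finset.mul_sum]
    _ ≤ 2 * Real.exp (-j) * Real.exp (1 / 2) := by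
        gcongr
        exact (average_cosh_signedSum_le a).trans (by gcongr)
    _ = 2 * Real.exp (1 / 2) * Real.exp (-j) := by ring

lemma average_norm_clip_signedSum_rpow_le (hA : IsLUB (summingPowers q S) A) (hq : 1 ≤ q)
    {x : Fin m → C(K, ℝ)} (hx : ∀ t, ∑ i, x i t ^ 2 ≤ 1) (j : ℕ) :
    ∑ ε, ((2 : ℝ) ^ m)⁻¹ * ‖S ((clip (j + 1) - clip j).comp (signedSum x ε))‖ ^ q ≤
      q * (2 * Real.exp (1 / 2) * Real.exp (-j)) * A := by
  refine average_norm_rpow_le hA hq (fun _ => by positivity) (sum_inv_two_pow_eq_one m)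
    (fun ε t => abs_clip_succ_sub_clip_le_one j _) (by positivity) fun t => ?_
  simpa only [ContinuousMap.comp_apply, signedSum_apply] using
    average_abs_clip_signedSum_le (hx t) j

/-- The sum over `j` of the `q`-th roots of the bounds `2 q exp (1/2 - j)` for the slices of signed
sums between the levels `j` and `j + 1`. -/
noncomputable def summingConst (q : ℝ) : ℝ :=
  (2 * q * Real.exp (1 / 2)) ^ (1 / q) * (1 - Real.exp (-(1 / q)))⁻¹

lemma summingConst_pos (hq : 0 < q) : 0 < summingConst q := by
  have : Real.exp (-(1 / q)) < 1 := Real.exp_lt_one_iff.2 (by simpa using hq)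
  have : 0 < 1 - Real.exp (-(1 / q)) := by linarith
  unfold summingConst
  positivity

lemma sum_exp_neg_natCast_rpow_le {s : ℝ} (hs : 0 < s) (N : ℕ) :
    ∑ j ∈ Finset.range N, Real.exp (-j) ^ s ≤ (1 - Real.exp (-s))⁻¹ := by
  have h_lt_one : Real.exp (-s) < 1 := Real.exp_lt_one_iff.2 (neg_lt_zero.2 hs)
  have h_pow (j : ℕ) : Real.exp (-j) ^ s = Real.exp (-s) ^ j := by
    rw [← Real.exp_mul, ← Real.exp_nat_mul]
    ring_nf
  simp only [h_pow]
  rw [← tsum_geometric_of_lt_one (Real.exp_pos _).le h_lt_one]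
  exact (summable_geometric_of_lt_one (Real.exp_pos _).le h_lt_one).sum_le_tsum _
    fun _ _ => by positivity

variable [CompactSpace K]

lemma norm_signedSum_le_one {f : Fin m → C(K, ℝ)} (hf : ∀ t, ∑ i, |f i t| ≤ 1)
    (ε : Fin m → Bool) : ‖signedSum f ε‖ ≤ 1 := by
  refine (ContinuousMap.norm_le _ zero_le_one).2 fun t => ?_
  rw [signedSum_apply]
  exact (norm_signedSum_le _ ε).trans (hf t)

lemma HasCotype.summingPowers_le {C : ℝ} (hcot : HasCotype q C X) (hq : 2 ≤ q) (hC : 0 ≤ C) :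
    (C * ‖S‖) ^ q ∈ upperBounds (summingPowers q S) := by
  rintro _ ⟨m, f, hf, rfl⟩
  have h_norm (ε : Fin m → Bool) : ‖signedSum (fun i => S (f i)) ε‖ ≤ ‖S‖ := by
    rw [← map_signedSum]
    exact S.unit_le_opNorm _ (norm_signedSum_le_one hf ε)
  calc ∑ i, ‖S (f i)‖ ^ q
      ≤ C ^ q * ∑ ε, ((2 : ℝ) ^ m)⁻¹ * ‖signedSum (fun i => S (f i)) ε‖ ^ q :=
        hcot.sum_norm_rpow_le hq hC _
    _ ≤ C ^ q * ∑ _ε : Fin m → Bool, ((2 : ℝ) ^ m)⁻¹ * ‖S‖ ^ q := by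
        gcongr with ε
        exact h_norm ε
    _ = (C * ‖S‖) ^ q := by
        rw [← Finset.sum_mul, sum_inv_two_pow_eq_one, one_mul, Real.mul_rpow hC (norm_nonneg S)]

lemma sum_clip_succ_sub_clip_comp {N : ℕ} {f : C(K, ℝ)} (hf : ‖f‖ ≤ N) :
    ∑ j ∈ Finset.range N, (clip (j + 1) - clip j).comp f = f := by
  ext t
  simp only [ContinuousMap.sum_apply, ContinuousMap.comp_apply, ContinuousMap.sub_apply]
  rw [Finset.sum_range_sub (fun j => clip j (f t)),
    clip_of_abs_le ((f.norm_coe_le_norm t).trans hf), clip_zero, ContinuousMap.zero_apply, sub_zero]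

lemma average_norm_signedSum_rpow_le (hA : IsLUB (summingPowers q S) A) (hA0 : 0 ≤ A) (hq : 1 ≤ q)
    {x : Fin m → C(K, ℝ)} (hx : ∀ t, ∑ i, x i t ^ 2 ≤ 1) :
    (∑ ε, ((2 : ℝ) ^ m)⁻¹ * ‖S (signedSum x ε)‖ ^ q) ^ (1 / q) ≤ summingConst q * A ^ (1 / q) := by
  have hq0 : 0 < q := by linarith
  obtain ⟨N, hN⟩ := exists_nat_ge (∑ i, ‖x i‖)
  let slice (j : ℕ) (ε : Fin m → Bool) : C(K, ℝ) := (clip (j + 1) - clip j).comp (signedSum x ε)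
  have h_slices (ε : Fin m → Bool) :
      S (signedSum x ε) = ∑ j ∈ Finset.range N, S (slice j ε) := by
    rw [← map_sum, sum_clip_succ_sub_clip_comp ((norm_signedSum_le x ε).trans hN)]
  calc (∑ ε, ((2 : ℝ) ^ m)⁻¹ * ‖S (signedSum x ε)‖ ^ q) ^ (1 / q)
      ≤ ∑ j ∈ Finset.range N, (∑ ε, ((2 : ℝ) ^ m)⁻¹ * ‖S (slice j ε)‖ ^ q) ^ (1 / q) := by
        simp only [h_slices]
        exact rpow_sum_mul_norm_sum_rpow_le hq (fun _ => by positivity) _ _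
    _ ≤ ∑ j ∈ Finset.range N, (q * (2 * Real.exp (1 / 2) * Real.exp (-j)) * A) ^ (1 / q) := by
        gcongr with j
        exact average_norm_clip_signedSum_rpow_le hA hq hx j
    _ = (2 * q * Real.exp (1 / 2)) ^ (1 / q) *
          (∑ j ∈ Finset.range N, Real.exp (-j) ^ (1 / q)) * A ^ (1 / q) := by
        rw [Finset.mul_sum, Finset.sum_mul]
        refine Finset.sum_congr rfl fun j _ => ?_
        rw [← Real.mul_rpow (by positivity) (by positivity),
          ← Real.mul_rpow (by positivity) hA0]
        ring_nf
    _ ≤ summingConst q * A ^ (1 / q) := by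
        unfold summingConst
        gcongr
        exact sum_exp_neg_natCast_rpow_le (one_div_pos.2 hq0) N

theorem HasCotype.sum_norm_apply_rpow_le {C : ℝ} (hcot : HasCotype q C X) (hq : 2 ≤ q) (hC : 0 ≤ C)
    (S : C(K, ℝ) →L[ℝ] X) {x : Fin m → C(K, ℝ)} (hx : ∀ t, ∑ i, x i t ^ 2 ≤ 1) :
    ∑ i, ‖S (x i)‖ ^ q ≤ (C * (summingConst q * (C * ‖S‖))) ^ q := by
  have hq0 : 0 < q := by linarith
  have hc : 0 < summingConst q := summingConst_pos hq0
  have h_bound : (C * ‖S‖) ^ q ∈ upperBounds (summingPowers q S) := hcot.summingPowers_le hq hC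
  set A := sSup (summingPowers q S)
  have hA : IsLUB (summingPowers q S) A := isLUB_csSup summingPowers_nonempty ⟨_, h_bound⟩
  have hA0 : 0 ≤ A := hA.1 ⟨0, Fin.elim0, by simp, by simp⟩
  set P := ∑ ε, ((2 : ℝ) ^ m)⁻¹ * ‖S (signedSum x ε)‖ ^ q
  have hP : P ≤ (summingConst q * (C * ‖S‖)) ^ q := by
    rw [← Real.rpow_inv_le_iff_of_pos (by positivity) (by positivity) hq0, ← one_div]
    refine (average_norm_signedSum_rpow_le hA hA0 (by linarith) hx).trans ?_
    gcongr
    rw [one_div, Real.rpow_inv_le_iff_of_pos hA0 (by positivity) hq0]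
    exact hA.2 h_bound
  calc ∑ i, ‖S (x i)‖ ^ q
      ≤ C ^ q * P := by
        simpa only [P, map_signedSum] using hcot.sum_norm_rpow_le hq hC fun i => S (x i)
    _ ≤ C ^ q * (summingConst q * (C * ‖S‖)) ^ q := by gcongr
    _ = (C * (summingConst q * (C * ‖S‖))) ^ q := (Real.mul_rpow hC (by positivity)).symm

end ContinuousFunctions

section LInfty

variable {Ω : Type*} [MeasurableSpace Ω] {μ : Measure Ω}

lemma ae_norm_le_one_of_forall_ae_inner_le {H : Type*} [NormedAddCommGroup H]
    [InnerProductSpace ℝ H] [TopologicalSpace.SeparableSpace H] {u : Ω → H}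
    (hu : ∀ a, ∀ᵐ t ∂μ, inner ℝ a (u t) ≤ ‖a‖) : ∀ᵐ t ∂μ, ‖u t‖ ≤ 1 := by
  have h_dense : ∀ᵐ t ∂μ, ∀ n, inner ℝ (TopologicalSpace.denseSeq H n) (u t) ≤
      ‖TopologicalSpace.denseSeq H n‖ := ae_all_iff.2 fun n => hu _
  filter_upwards [h_dense] with t ht
  have h_inner (a : H) : inner ℝ a (u t) ≤ ‖a‖ := by
    have h_closed : IsClosed {a : H | inner ℝ a (u t) ≤ ‖a‖} :=
      isClosed_le (by fun_prop) (by fun_prop)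
    exact h_closed.closure_subset_iff.2 (Set.range_subset_iff.2 ht)
      (TopologicalSpace.denseRange_denseSeq H a)
  have h_sq : ‖u t‖ * ‖u t‖ ≤ ‖u t‖ := (real_inner_self_eq_norm_mul_norm (u t)).ge.trans (h_inner _)
  nlinarith [norm_nonneg (u t)]

lemma ae_norm_le_norm_of_Lp_top {E : Type*} [NormedAddCommGroup E] (f : Lp E ∞ μ) :
    ∀ᵐ t ∂μ, ‖f t‖ ≤ ‖f‖ := by
  rw [Lp.norm_def, toReal_eLpNorm (Lp.aestronglyMeasurable f)]
  exact ae_le_lpNorm_exponent_top (Lp.memLp f)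

lemma coeFn_sum_smul {ι E : Type*} [Fintype ι] [NormedAddCommGroup E] [NormedSpace ℝ E] {p : ℝ≥0∞}
    (a : ι → ℝ) (x : ι → Lp E p μ) :
    (∑ i, a i • x i : Lp E p μ) =ᵐ[μ] fun t => ∑ i, a i • x i t := by
  filter_upwards [Lp.coeFn_finsetSum Finset.univ fun i => a i • x i,
    ae_all_iff.2 fun i => Lp.coeFn_smul (a i) (x i)] with t h_sum h_smul
  simp only [h_sum, Finset.sum_apply, h_smul, Pi.smul_apply]

lemma ae_norm_toLp_le_one {k : ℕ} {x : Fin k → Lp ℝ ∞ μ}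
    (hx : ∀ a : EuclideanSpace ℝ (Fin k), ‖∑ i, a i • x i‖ ≤ ‖a‖) :
    ∀ᵐ t ∂μ, ‖(WithLp.toLp 2 fun i => x i t : EuclideanSpace ℝ (Fin k))‖ ≤ 1 := by
  refine ae_norm_le_one_of_forall_ae_inner_le fun a => ?_
  filter_upwards [coeFn_sum_smul a x, ae_norm_le_norm_of_Lp_top (∑ i, a i • x i)]
    with t h_sum h_norm
  calc inner ℝ a (WithLp.toLp 2 fun i => x i t) = (∑ i, a i • x i : Lp ℝ ∞ μ) t := by
        rw [h_sum]
        simp [PiLp.inner_apply, mul_comm]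
    _ ≤ ‖∑ i, a i • x i‖ := (Real.le_norm_self _).trans h_norm
    _ ≤ ‖a‖ := hx a

lemma exists_measurable_closedBall_ae_eq {k : ℕ} {x : Fin k → Lp ℝ ∞ μ}
    (hx : ∀ a : EuclideanSpace ℝ (Fin k), ‖∑ i, a i • x i‖ ≤ ‖a‖) :
    ∃ u : Ω → Metric.closedBall (0 : EuclideanSpace ℝ (Fin k)) 1, Measurable u ∧
      ∀ i, x i =ᵐ[μ] fun t => (u t : EuclideanSpace ℝ (Fin k)) i := by
  have h_meas : AEMeasurable
      (fun t => (WithLp.toLp 2 fun i => x i t : EuclideanSpace ℝ (Fin k))) μ :=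
    ((PiLp.continuous_toLp 2 _).measurable.comp <|
      measurable_pi_lambda _ fun i => (Lp.stronglyMeasurable (x i)).measurable).aemeasurable
  obtain ⟨u, hu, hu_ball, hu_eq⟩ := h_meas.exists_ae_eq_range_subset
    ((ae_norm_toLp_le_one hx).mono fun t ht => mem_closedBall_zero_iff.2 ht)
    ⟨0, Metric.mem_closedBall_self zero_le_one⟩
  refine ⟨fun t => ⟨u t, hu_ball ⟨t, rfl⟩⟩, hu.subtype_mk, fun i => ?_⟩
  filter_upwards [hu_eq] with t ht
  rw [← ht]

variable {K : Type*} [TopologicalSpace K] [CompactSpace K] [MeasurableSpace K]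
  [OpensMeasurableSpace K] {u : Ω → K}

lemma memLp_top_continuousMap_comp (μ : Measure Ω) (hu : Measurable u) (φ : C(K, ℝ)) :
    MemLp (φ ∘ u) ∞ μ :=
  memLp_top_of_bound (φ.continuous.measurable.comp hu).aestronglyMeasurable ‖φ‖
    (Eventually.of_forall fun t => φ.norm_coe_le_norm (u t))

/-- The composition operator `φ ↦ φ ∘ u` from `C(K)` to `L_∞(μ)`, through which finite families in
`L_∞(μ)` are pulled back to families of continuous functions. -/
noncomputable def compLInfty (μ : Measure Ω) (hu : Measurable u) : C(K, ℝ) →L[ℝ] Lp ℝ ∞ μ :=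
  LinearMap.mkContinuous
    { toFun := fun φ => (memLp_top_continuousMap_comp μ hu φ).toLp
      map_add' := fun _ _ => rfl
      map_smul' := fun _ _ => rfl } 1 fun φ => by
    rw [one_mul]
    exact (Lp.norm_toLp _ (memLp_top_continuousMap_comp μ hu φ)).trans_le <|
      ENNReal.toReal_le_of_le_ofReal (norm_nonneg φ) <|
        eLpNormEssSup_le_of_ae_bound (Eventually.of_forall fun t => φ.norm_coe_le_norm (u t))

lemma norm_compLInfty_le_one (hu : Measurable u) : ‖compLInfty μ hu‖ ≤ 1 :=
  LinearMap.mkContinuous_norm_le _ zero_le_one _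

lemma coeFn_compLInfty (hu : Measurable u) (φ : C(K, ℝ)) : compLInfty μ hu φ =ᵐ[μ] φ ∘ u :=
  (memLp_top_continuousMap_comp μ hu φ).coeFn_toLp

end LInfty

section Summing

variable {E X : Type*} [NormedAddCommGroup E] [NormedSpace ℝ E] [NormedAddCommGroup X]
  [NormedSpace ℝ X] {q B : ℝ} {T : E →L[ℝ] X}

/-- `T` is absolutely `(q, 2)`-summing with constant `B`. The weak `ℓ₂` norm of `(xᵢ)` is expressed
as the norm of the operator `a ↦ ∑ aᵢ xᵢ` on Euclidean space. -/
def IsTwoSumming (q B : ℝ) (T : E →L[ℝ] X) : Prop :=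
  ∀ (k : ℕ) (x : Fin k → E), (∀ a : EuclideanSpace ℝ (Fin k), ‖∑ i, a i • x i‖ ≤ ‖a‖) →
    ∑ i, ‖T (x i)‖ ^ q ≤ B ^ q

theorem HasCotype.isTwoSumming {Ω : Type*} [MeasurableSpace Ω] {μ : Measure Ω} {C : ℝ}
    (hcot : HasCotype q C X) (hq : 2 ≤ q) (hC : 0 ≤ C) (T : Lp ℝ ∞ μ →L[ℝ] X) :
    IsTwoSumming q (C * (summingConst q * (C * ‖T‖))) T := by
  intro k x hx
  obtain ⟨u, hu, hxu⟩ := exists_measurable_closedBall_ae_eq hx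
  let coord (i : Fin k) : C(Metric.closedBall (0 : EuclideanSpace ℝ (Fin k)) 1, ℝ) :=
    ⟨fun v => (v : EuclideanSpace ℝ (Fin k)) i, by fun_prop⟩
  have h_lift (i : Fin k) : compLInfty μ hu (coord i) = x i :=
    Lp.ext ((coeFn_compLInfty hu _).trans (hxu i).symm)
  have h_ball (v : Metric.closedBall (0 : EuclideanSpace ℝ (Fin k)) 1) :
      ∑ i, coord i v ^ 2 ≤ 1 := by
    have := mem_closedBall_zero_iff.1 v.2
    rw [← sq_le_one_iff₀ (norm_nonneg _), EuclideanSpace.real_norm_sq_eq] at this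
    exact this
  have h_norm : ‖T ∘L compLInfty μ hu‖ ≤ ‖T‖ :=
    (T.opNorm_comp_le _).trans (mul_le_of_le_one_right (norm_nonneg T) (norm_compLInfty_le_one hu))
  have hc := (summingConst_pos (q := q) (by linarith)).le
  calc ∑ i, ‖T (x i)‖ ^ q
      ≤ (C * (summingConst q * (C * ‖T ∘L compLInfty μ hu‖))) ^ q := by
        simpa only [ContinuousLinearMap.comp_apply, h_lift] using
          hcot.sum_norm_apply_rpow_le hq hC (T ∘L compLInfty μ hu) h_ball
    _ ≤ (C * (summingConst q * (C * ‖T‖))) ^ q := by gcongr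

end Summing

section Bernstein

variable {E X : Type*} [NormedAddCommGroup E] [NormedSpace ℝ E] [NormedAddCommGroup X]
  [NormedSpace ℝ X] {q B c : ℝ} {T : E →L[ℝ] X} {n : ℕ}

lemma bernsteinNumber_nonneg (T : E →L[ℝ] X) (n : ℕ) : 0 ≤ bernsteinNumber T n := by
  refine Real.sSup_nonneg ?_
  rintro _ ⟨F, -, rfl⟩
  refine Real.sInf_nonneg ?_
  rintro _ ⟨x, -, -, rfl⟩
  positivity

lemma bernsteinNumber_le_of_forall (hc : 0 ≤ c)
    (h : ∀ F : Submodule ℝ E, Module.finrank ℝ F = n → ∀ r, 0 ≤ r →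
      (∀ x ∈ F, r * ‖x‖ ≤ ‖T x‖) → r ≤ c) : bernsteinNumber T n ≤ c := by
  refine Real.sSup_le ?_ hc
  rintro _ ⟨F, hF, rfl⟩
  have h_nonneg : ∀ s ∈ {s : ℝ | ∃ x ∈ F, x ≠ 0 ∧ s = ‖T x‖ / ‖x‖}, 0 ≤ s := by
    rintro _ ⟨x, -, -, rfl⟩
    positivity
  refine h F hF _ (Real.sInf_nonneg h_nonneg) fun x hx => ?_
  rcases eq_or_ne x 0 with rfl | hx0
  · simp
  rw [← le_div_iff₀ (norm_pos_iff.2 hx0)]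
  exact csInf_le ⟨0, h_nonneg⟩ ⟨x, hx, hx0, rfl⟩

lemma norm_sum_comp_le_of_injective {ι κ : Type*} [Fintype ι] [Fintype κ] {e : ι → κ}
    (he : Function.Injective e) {x : κ → E}
    (hx : ∀ b : EuclideanSpace ℝ κ, ‖∑ j, b j • x j‖ ≤ ‖b‖) (a : EuclideanSpace ℝ ι) :
    ‖∑ i, a i • x (e i)‖ ≤ ‖a‖ := by
  let b : EuclideanSpace ℝ κ := WithLp.toLp 2 (Function.extend e (fun i => a i) 0)
  have hb (i : ι) : b (e i) = a i := he.extend_apply _ _ i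
  have hb0 (j : κ) (hj : j ∉ Set.range e) : b j = 0 := Function.extend_apply' _ _ j hj
  have h_sum : ∑ i, a i • x (e i) = ∑ j, b j • x j :=
    Fintype.sum_of_injective e he _ _ (fun j hj => by rw [hb0 j hj, zero_smul])
      fun i => by rw [hb]
  have h_norm : ‖b‖ = ‖a‖ := by
    simp only [EuclideanSpace.norm_eq]
    rw [← Fintype.sum_of_injective e he (fun i => ‖a i‖ ^ 2) _ (fun j hj => by simp [hb0 j hj])
      fun i => by rw [hb]]
  exact h_sum ▸ h_norm ▸ hx b

lemma exists_half_le_norm_of_finrank {F : Submodule ℝ E} [FiniteDimensional ℝ F]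
    (hF : Module.finrank ℝ F = n) :
    ∃ (k : ℕ) (x : Fin k → F), n ≤ 2 * k ∧ (∀ i, 1 / 2 ≤ ‖x i‖) ∧
      ∀ a : EuclideanSpace ℝ (Fin k), ‖∑ i, a i • x i‖ ≤ ‖a‖ := by
  obtain ⟨x, hx_norm, hx⟩ := dvoretzky_rogers hF
  have hkn : (n + 1) / 2 ≤ n := by omega
  refine ⟨(n + 1) / 2, x ∘ Fin.castLE hkn, by omega, fun i => ?_,
    norm_sum_comp_le_of_injective (Fin.castLE_injective hkn) hx⟩
  have h_index : (2 * i + 1 : ℝ) ≤ n := by exact_mod_cast (by omega : 2 * (i : ℕ) + 1 ≤ n)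
  have h_norm : (n : ℝ) - i ≤ n * ‖x (Fin.castLE hkn i)‖ := hx_norm (Fin.castLE hkn i)
  simp only [Function.comp_apply]
  by_contra! h_lt
  nlinarith [norm_nonneg (x (Fin.castLE hkn i))]

lemma natCast_rpow_le_two_mul {s : ℝ} (hs0 : 0 ≤ s) (hs1 : s ≤ 1) {k : ℕ} (hnk : n ≤ 2 * k) :
    (n : ℝ) ^ s ≤ 2 * (k : ℝ) ^ s := by
  calc (n : ℝ) ^ s ≤ (2 * k : ℝ) ^ s := by
        gcongr
        exact_mod_cast hnk
    _ = 2 ^ s * (k : ℝ) ^ s := Real.mul_rpow zero_le_two (Nat.cast_nonneg k)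
    _ ≤ 2 * (k : ℝ) ^ s := by
        gcongr
        exact Real.rpow_le_self_of_one_le one_le_two hs1

theorem IsTwoSumming.bernsteinNumber_le (hT : IsTwoSumming q B T) (hq : 1 ≤ q) (hB : 0 ≤ B)
    (hn : 1 ≤ n) : bernsteinNumber T n ≤ 4 * B * (n : ℝ) ^ (-(1 / q)) := by
  have hq0 : 0 < q := by linarith
  have hn0 : (0 : ℝ) < n := by exact_mod_cast hn
  refine bernsteinNumber_le_of_forall (by positivity) fun F hF r hr hrT => ?_
  have : FiniteDimensional ℝ F := Module.finite_of_finrank_pos (by omega)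
  obtain ⟨k, x, hnk, hx_norm, hx⟩ := exists_half_le_norm_of_finrank hF
  have h_below (i : Fin k) : r / 2 ≤ ‖T (x i)‖ := by
    refine le_trans ?_ (hrT (x i) (x i).2)
    rw [div_eq_mul_one_div]
    gcongr
    exact hx_norm i
  have h_sum : k * (r / 2) ^ q ≤ B ^ q :=
    calc k * (r / 2) ^ q = ∑ _i : Fin k, (r / 2) ^ q := by simp
      _ ≤ ∑ i, ‖T (x i)‖ ^ q := by
        gcongr with i
        exact h_below i
      _ ≤ B ^ q := hT k (fun i => x i) fun a => by simpa using hx a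
  have h_root : (k : ℝ) ^ (1 / q) * (r / 2) ≤ B := by
    rw [← Real.rpow_le_rpow_iff (by positivity) hB hq0,
      Real.mul_rpow (by positivity) (by positivity), one_div,
      Real.rpow_inv_rpow (Nat.cast_nonneg k) hq0.ne']
    exact h_sum
  rw [Real.rpow_neg hn0.le, ← div_eq_mul_inv, le_div_iff₀ (by positivity)]
  calc r * (n : ℝ) ^ (1 / q) ≤ r * (2 * (k : ℝ) ^ (1 / q)) := by
        gcongr
        exact natCast_rpow_le_two_mul (by positivity) ((div_le_one hq0).2 hq) hnk
    _ = 4 * ((k : ℝ) ^ (1 / q) * (r / 2)) := by ring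
    _ ≤ 4 * B := by gcongr

lemma superStrictlySingular_of_le_rpow {s : ℝ} (hs : 0 < s)
    (h : ∀ n : ℕ, 1 ≤ n → bernsteinNumber T n ≤ c * (n : ℝ) ^ (-s)) :
    SuperStrictlySingular T := by
  have h_lim : Tendsto (fun n : ℕ => c * (n : ℝ) ^ (-s)) atTop (nhds 0) := by
    simpa using ((tendsto_rpow_neg_atTop hs).comp tendsto_natCast_atTop_atTop).const_mul c
  refine tendsto_of_tendsto_of_tendsto_of_le_of_le' tendsto_const_nhds h_lim
    (Eventually.of_forall (bernsteinNumber_nonneg T)) ?_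
  filter_upwards [eventually_ge_atTop 1] with n hn using h n hn

end Bernstein

theorem statement8_general {X : Type*} [NormedAddCommGroup X] [NormedSpace ℝ X] (q C : ℝ)
    (hq : 2 ≤ q) (hC : 0 < C) (hcot : HasCotype q C X) :
    ∃ K : ℝ, 0 < K ∧ ∀ {Ω : Type*} [MeasurableSpace Ω] (μ : Measure Ω) (T : Lp ℝ ∞ μ →L[ℝ] X),
      (∀ n : ℕ, 1 ≤ n → bernsteinNumber T n ≤ K * ‖T‖ * (n : ℝ) ^ (-(1 / q))) ∧
      SuperStrictlySingular T := by
  have hq0 : 0 < q := by linarith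
  have hc : 0 < summingConst q := summingConst_pos hq0
  refine ⟨4 * (C * (summingConst q * C)), by positivity, fun {Ω} _ μ T => ?_⟩
  have h_bernstein (n : ℕ) (hn : 1 ≤ n) :
      bernsteinNumber T n ≤ 4 * (C * (summingConst q * C)) * ‖T‖ * (n : ℝ) ^ (-(1 / q)) :=
    ((hcot.isTwoSumming hq hC.le T).bernsteinNumber_le (by linarith) (by positivity) hn).trans_eq
      (by ring)
  exact ⟨h_bernstein, superStrictlySingular_of_le_rpow (one_div_pos.2 hq0) h_bernstein⟩

/-- If `X` has cotype `q ∈ [2, ∞)`, then there is a constant `K > 0` such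
that every bounded operator `T : L_∞[0,1] → X` satisfies `b_n(T) ≤ K ‖T‖ n^(-1/q)` for all
`n ≥ 1`; in particular every such operator is super strictly singular. -/
theorem statement8 {X : Type*} [NormedAddCommGroup X] [NormedSpace ℝ X] [CompleteSpace X]
    (q C : ℝ) (hq : 2 ≤ q) (hC : 0 < C) (hcot : HasCotype q C X) :
    ∃ K : ℝ, 0 < K ∧ ∀ T : Lp ℝ ∞ μ01 →L[ℝ] X,
      (∀ n : ℕ, 1 ≤ n → bernsteinNumber T n ≤ K * ‖T‖ * (n : ℝ) ^ (-(1 / q))) ∧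
      SuperStrictlySingular T := by
  obtain ⟨K, hK, h⟩ := statement8_general q C hq hC hcot
  exact ⟨K, hK, h μ01⟩
end

section
/- Let 1 ≤ q < p < ∞ and let T: L_p[0,1] → L_q[0,1] be a positive bounded operator. Then T is M-weakly compact: for every norm-bounded pairwise disjoint sequence (x_n) in L_p, ‖Tx_n‖_q → 0. -/
/-!
Replacing `x n` by `|x n|`, the images `T |x n|` are positive but no longer disjoint. Positivity is
enough: on positive functions the `q`-th power of the `L_q` norm is superadditive, while on disjoint
functions the `p`-th power of the `L_p` norm is additive. If `‖T |x i|‖ ≥ δ` for `N` indices `i`,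
then `N ^ (1 / q) * δ ≤ ‖T (∑ |x i|)‖ ≤ ‖T‖ * B * N ^ (1 / p)`, which bounds `N` because `q < p`.
Neither weak convergence nor the Kadec–Pełczyński dichotomy is needed.
-/

open MeasureTheory ENNReal Filter Set

section PowerSums

variable {ι : Type*}

lemma tendsto_cofinite_zero_of_sum_le_card_rpow {a : ι → ℝ} {K θ : ℝ}
    (ha : ∀ i, 0 ≤ a i) (hθ : θ < 1) (h : ∀ s : Finset ι, ∑ i ∈ s, a i ≤ K * (s.card : ℝ) ^ θ) :
    Tendsto a cofinite (nhds 0) := by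
  refine tendsto_order.2 ⟨fun b hb => .of_forall fun i => hb.trans_le (ha i), fun δ hδ => ?_⟩
  by_contra hinf
  have hlim : Tendsto (fun N : ℕ => (N : ℝ) ^ (1 - θ)) atTop atTop :=
    (tendsto_rpow_atTop (sub_pos.2 hθ)).comp tendsto_natCast_atTop_atTop
  obtain ⟨N, hKN, hN⟩ := ((hlim.eventually_gt_atTop (K / δ)).and (eventually_gt_atTop 0)).exists
  obtain ⟨s, hs, rfl⟩ := Set.Infinite.exists_subset_card_eq hinf N
  have hcard : (0 : ℝ) < s.card := Nat.cast_pos.2 hN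
  have hlower : s.card * δ ≤ ∑ i ∈ s, a i := by
    rw [← nsmul_eq_mul]
    exact s.card_nsmul_le_sum _ _ fun i hi => not_lt.1 (hs hi)
  rw [Real.rpow_sub hcard, Real.rpow_one,
    div_lt_div_iff₀ hδ (Real.rpow_pos_of_pos hcard θ)] at hKN
  linarith [h s]

lemma sum_rpow_le_rpow_sum {s : Finset ι} {a : ι → ℝ} {r : ℝ} (hr : 1 ≤ r)
    (ha : ∀ i ∈ s, 0 ≤ a i) :
    ∑ i ∈ s, a i ^ r ≤ (∑ i ∈ s, a i) ^ r := by
  induction s using Finset.cons_induction with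
  | empty => simp only [Finset.sum_empty, Real.zero_rpow (zero_lt_one.trans_le hr).ne', le_refl]
  | cons i s hi ih =>
    rw [Finset.forall_mem_cons] at ha
    rw [Finset.sum_cons, Finset.sum_cons]
    calc a i ^ r + ∑ j ∈ s, a j ^ r ≤ a i ^ r + (∑ j ∈ s, a j) ^ r := by gcongr; exact ih ha.2
      _ ≤ (a i + ∑ j ∈ s, a j) ^ r :=
        Real.add_rpow_le_rpow_add ha.1 (Finset.sum_nonneg ha.2) hr

lemma norm_sum_rpow_of_pairwise_eq_zero {E : Type*} [SeminormedAddCommGroup E] {s : Finset ι}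
    {a : ι → E} {r : ℝ} (hr : r ≠ 0) (ha : (s : Set ι).Pairwise fun i j => a i = 0 ∨ a j = 0) :
    ‖∑ i ∈ s, a i‖ ^ r = ∑ i ∈ s, ‖a i‖ ^ r := by
  by_cases hzero : ∀ i ∈ s, a i = 0
  · rw [Finset.sum_eq_zero hzero, norm_zero, Real.zero_rpow hr, Finset.sum_eq_zero]
    intro i hi
    rw [hzero i hi, norm_zero, Real.zero_rpow hr]
  · push Not at hzero
    obtain ⟨i, hi, hai⟩ := hzero
    have hother : ∀ j ∈ s, j ≠ i → a j = 0 := fun j hj hji => (ha hj hi hji).resolve_right hai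
    rw [Finset.sum_eq_single_of_mem i hi hother, Finset.sum_eq_single_of_mem i hi]
    intro j hj hji
    rw [hother j hj hji, norm_zero, Real.zero_rpow hr]

end PowerSums

lemma abs_map_le_map_abs {E F G : Type*} [AddCommGroup E] [Lattice E] [IsOrderedAddMonoid E]
    [AddCommGroup F] [Lattice F] [IsOrderedAddMonoid F] [FunLike G E F] [AddMonoidHomClass G E F]
    (T : G) (hT : ∀ x, 0 ≤ x → 0 ≤ T x) (x : E) : |T x| ≤ T |x| := by
  have hmono : Monotone T := (monotone_iff_map_nonneg T).2 hT
  exact abs_le'.2 ⟨hmono (le_abs_self x), map_neg T x ▸ hmono (neg_le_abs x)⟩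

section NormedLattice

open scoped NNReal Topology

variable {E F : Type*} [NormedAddCommGroup E] [Lattice E] [NormedAddCommGroup F]

variable (E) in
/-- The upper `p`-estimate of a normed lattice, with both sides raised to the power `p`. -/
def HasUpperEstimate (p : ℝ) : Prop :=
  ∃ C : ℝ≥0, ∀ (s : Finset ℕ) (x : ℕ → E), Pairwise (fun i j => |x i| ⊓ |x j| = 0) →
    ‖∑ i ∈ s, x i‖ ^ p ≤ C * ∑ i ∈ s, ‖x i‖ ^ p

variable (E) in
/-- The lower `q`-estimate of a normed lattice, with both sides raised to the power `q`. It is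
required of all positive vectors instead of the disjoint ones, because a positive operator
preserves positivity but not disjointness. -/
def HasLowerEstimate (q : ℝ) : Prop :=
  ∃ C : ℝ≥0, ∀ (s : Finset ℕ) (y : ℕ → E), (∀ i, 0 ≤ y i) →
    ∑ i ∈ s, ‖y i‖ ^ q ≤ C * ‖∑ i ∈ s, y i‖ ^ q

/-- M-weak compactness: norm-bounded disjoint sequences are mapped to norm-null sequences. -/
def IsMWeaklyCompact (T : E → F) : Prop :=
  ∀ x : ℕ → E, (∃ B : ℝ, ∀ n, ‖x n‖ ≤ B) → Pairwise (fun n m => |x n| ⊓ |x m| = 0) →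
    Tendsto (fun n => ‖T (x n)‖) atTop (𝓝 0)

lemma HasUpperEstimate.exists_norm_sum_abs_rpow_le [IsOrderedAddMonoid E] [HasSolidNorm E]
    {p q : ℝ} (hp : 0 < p) (hq : 0 ≤ q) (hE : HasUpperEstimate E p)
    {x : ℕ → E} {B : ℝ} (hB : ∀ n, ‖x n‖ ≤ B)
    (hx : Pairwise fun i j => |x i| ⊓ |x j| = 0) :
    ∃ K : ℝ, ∀ s : Finset ℕ, ‖∑ i ∈ s, |x i|‖ ^ q ≤ K * (s.card : ℝ) ^ (q / p) := by
  obtain ⟨C, hC⟩ := hE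
  have hB0 : 0 ≤ B := (norm_nonneg _).trans (hB 0)
  refine ⟨(C * B ^ p) ^ (q / p), fun s => ?_⟩
  have hsum : ‖∑ i ∈ s, |x i|‖ ^ p ≤ C * B ^ p * s.card :=
    calc ‖∑ i ∈ s, |x i|‖ ^ p ≤ C * ∑ i ∈ s, ‖|x i|‖ ^ p :=
          hC s (fun i => |x i|) (by simpa only [abs_abs] using hx)
      _ ≤ C * ∑ _i ∈ s, B ^ p := by
          gcongr with i
          rw [norm_abs_eq_norm]
          exact hB i
      _ = C * B ^ p * s.card := by rw [Finset.sum_const, nsmul_eq_mul]; ring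
  calc ‖∑ i ∈ s, |x i|‖ ^ q = (‖∑ i ∈ s, |x i|‖ ^ p) ^ (q / p) := by
        rw [← Real.rpow_mul (norm_nonneg _), mul_div_cancel₀ _ hp.ne']
    _ ≤ (C * B ^ p * s.card) ^ (q / p) := by gcongr
    _ = (C * B ^ p) ^ (q / p) * (s.card : ℝ) ^ (q / p) :=
        Real.mul_rpow (by positivity) (by positivity)

theorem isMWeaklyCompact_of_hasUpperEstimate_of_hasLowerEstimate
    [IsOrderedAddMonoid E] [HasSolidNorm E] [NormedSpace ℝ E]
    [Lattice F] [IsOrderedAddMonoid F] [HasSolidNorm F] [NormedSpace ℝ F]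
    {p q : ℝ} (hq : 0 < q) (hqp : q < p)
    (hE : HasUpperEstimate E p) (hF : HasLowerEstimate F q)
    (T : E →L[ℝ] F) (hT : ∀ x, 0 ≤ x → 0 ≤ T x) : IsMWeaklyCompact T := by
  rintro x ⟨B, hB⟩ hx
  have hp : 0 < p := hq.trans hqp
  obtain ⟨K, hK⟩ := hE.exists_norm_sum_abs_rpow_le hp hq.le hB hx
  obtain ⟨D, hD⟩ := hF
  have hnorm (n : ℕ) : ‖T (x n)‖ ≤ ‖T |x n|‖ :=
    norm_le_norm_of_abs_le_abs ((abs_map_le_map_abs T hT (x n)).trans (le_abs_self _))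
  have hsum (s : Finset ℕ) :
      ∑ i ∈ s, ‖T (x i)‖ ^ q ≤ D * ‖T‖ ^ q * K * (s.card : ℝ) ^ (q / p) :=
    calc ∑ i ∈ s, ‖T (x i)‖ ^ q ≤ ∑ i ∈ s, ‖T |x i|‖ ^ q := by gcongr with i; exact hnorm i
      _ ≤ D * ‖∑ i ∈ s, T |x i|‖ ^ q := hD s _ fun i => hT _ (abs_nonneg _)
      _ = D * ‖T (∑ i ∈ s, |x i|)‖ ^ q := by rw [map_sum]
      _ ≤ D * (‖T‖ * ‖∑ i ∈ s, |x i|‖) ^ q := by gcongr; exact T.le_opNorm _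
      _ = D * ‖T‖ ^ q * ‖∑ i ∈ s, |x i|‖ ^ q := by
          rw [Real.mul_rpow (norm_nonneg _) (norm_nonneg _), mul_assoc]
      _ ≤ D * ‖T‖ ^ q * (K * (s.card : ℝ) ^ (q / p)) := by gcongr; exact hK s
      _ = D * ‖T‖ ^ q * K * (s.card : ℝ) ^ (q / p) := by ring
  have hlim : Tendsto (fun n => ‖T (x n)‖ ^ q) atTop (𝓝 0) := by
    rw [← Nat.cofinite_eq_atTop]
    exact tendsto_cofinite_zero_of_sum_le_card_rpow (fun n => by positivity)
      ((div_lt_one hp).2 hqp) hsum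
  simpa only [Real.rpow_rpow_inv (norm_nonneg _) hq.ne', Real.zero_rpow (inv_pos.2 hq).ne'] using
    hlim.rpow_const (Or.inr (inv_pos.2 hq).le)

end NormedLattice

section Lp

variable {α : Type*} [MeasurableSpace α] {μ : Measure α} {p : ℝ≥0∞}

lemma Lp_ae_pairwise_eq_zero_of_disjoint {ι : Type*} [Countable ι] {f : ι → Lp ℝ p μ}
    (hf : Pairwise fun i j => |f i| ⊓ |f j| = 0) :
    ∀ᵐ t ∂μ, Pairwise fun i j => f i t = 0 ∨ f j t = 0 := by
  simp only [Pairwise, ae_all_iff]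
  intro i j hij
  have hinf : ⇑(|f i| ⊓ |f j|) =ᵐ[μ] 0 := hf hij ▸ Lp.coeFn_zero ℝ p μ
  filter_upwards [hinf, Lp.coeFn_inf |f i| |f j|, Lp.coeFn_abs (f i), Lp.coeFn_abs (f j)]
    with t hzero hinf_t hi hj
  have hmin : min |f i t| |f j t| = 0 := by
    rw [← hi, ← hj]
    exact hinf_t.symm.trans hzero
  rcases min_choice |f i t| |f j t| with hleft | hright
  · exact Or.inl (abs_eq_zero.1 (hleft ▸ hmin))
  · exact Or.inr (abs_eq_zero.1 (hright ▸ hmin))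

lemma Lp_ae_norm_sum_rpow_of_disjoint {ι : Type*} [Countable ι] (s : Finset ι)
    {f : ι → Lp ℝ p μ} {r : ℝ} (hr : r ≠ 0) (hf : Pairwise fun i j => |f i| ⊓ |f j| = 0) :
    ∀ᵐ t ∂μ, ‖(∑ i ∈ s, f i) t‖ ^ r = ∑ i ∈ s, ‖f i t‖ ^ r := by
  filter_upwards [Lp.coeFn_finsetSum s f, Lp_ae_pairwise_eq_zero_of_disjoint hf] with t hsum hdisj
  rw [hsum, Finset.sum_apply, norm_sum_rpow_of_pairwise_eq_zero hr (hdisj.set_pairwise _)]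

variable {E : Type*} [NormedAddCommGroup E]

lemma Lp_norm_rpow_toReal (hp₀ : p ≠ 0) (hp : p ≠ ∞) (f : Lp E p μ) :
    ‖f‖ ^ p.toReal = ∫ t, ‖f t‖ ^ p.toReal ∂μ := by
  have hf := Lp.aestronglyMeasurable f
  rw [Lp.norm_def, toReal_eLpNorm hf, lpNorm_eq_integral_norm_rpow_toReal hp₀ hp hf,
    Real.rpow_inv_rpow (by positivity) (ENNReal.toReal_pos hp₀ hp).ne']

lemma Lp_sum_norm_rpow_toReal {ι : Type*} (hp₀ : p ≠ 0) (hp : p ≠ ∞) (s : Finset ι)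
    (f : ι → Lp E p μ) :
    ∑ i ∈ s, ‖f i‖ ^ p.toReal = ∫ t, ∑ i ∈ s, ‖f i t‖ ^ p.toReal ∂μ := by
  simp only [Lp_norm_rpow_toReal hp₀ hp]
  exact (integral_finsetSum s fun i _ => (Lp.memLp (f i)).integrable_norm_rpow hp₀ hp).symm

lemma Lp_top_ae_norm_le (f : Lp E ∞ μ) : ∀ᵐ t ∂μ, ‖f t‖ ≤ ‖f‖ := by
  rw [Lp.norm_def, toReal_eLpNorm (Lp.aestronglyMeasurable f)]
  exact ae_le_lpNorm_exponent_top (Lp.memLp f)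

lemma Lp_top_norm_le_of_ae_norm_le {f : Lp E ∞ μ} {C : ℝ} (hC : 0 ≤ C)
    (hf : ∀ᵐ t ∂μ, ‖f t‖ ≤ C) : ‖f‖ ≤ C := by
  rw [Lp.norm_def, eLpNorm_exponent_top]
  exact ENNReal.toReal_le_of_le_ofReal hC (eLpNormEssSup_le_of_ae_bound hf)

variable (μ) [Fact (1 ≤ p)]

lemma Lp_hasUpperEstimate (hp : p ≠ ∞) : HasUpperEstimate (Lp ℝ p μ) p.toReal := by
  have hp₀ : p ≠ 0 := (zero_lt_one.trans_le Fact.out).ne'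
  refine ⟨1, fun s f hf => ?_⟩
  rw [Lp_norm_rpow_toReal hp₀ hp, Lp_sum_norm_rpow_toReal hp₀ hp, NNReal.coe_one, one_mul]
  exact (integral_congr_ae
    (Lp_ae_norm_sum_rpow_of_disjoint s (ENNReal.toReal_pos hp₀ hp).ne' hf)).le

lemma Lp_top_hasUpperEstimate {r : ℝ} (hr : 0 < r) : HasUpperEstimate (Lp ℝ ∞ μ) r := by
  refine ⟨1, fun s f hf => ?_⟩
  have hsum : 0 ≤ ∑ i ∈ s, ‖f i‖ ^ r := by positivity
  rw [NNReal.coe_one, one_mul, ← Real.le_rpow_inv_iff_of_pos (norm_nonneg _) hsum hr]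
  refine Lp_top_norm_le_of_ae_norm_le (by positivity) ?_
  filter_upwards [Lp_ae_norm_sum_rpow_of_disjoint s hr.ne' hf,
    ae_all_iff.2 fun i => Lp_top_ae_norm_le (f i)] with t heq hle
  rw [Real.le_rpow_inv_iff_of_pos (norm_nonneg _) hsum hr, heq]
  gcongr with i
  exact hle i

lemma Lp_hasLowerEstimate (hp : p ≠ ∞) : HasLowerEstimate (Lp ℝ p μ) p.toReal := by
  have hp₁ : 1 ≤ p := Fact.out
  have hp₀ : p ≠ 0 := (zero_lt_one.trans_le hp₁).ne'
  refine ⟨1, fun s f hf => ?_⟩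
  rw [Lp_norm_rpow_toReal hp₀ hp, Lp_sum_norm_rpow_toReal hp₀ hp, NNReal.coe_one, one_mul]
  have hint (g : Lp ℝ p μ) : Integrable (fun t => ‖g t‖ ^ p.toReal) μ :=
    (Lp.memLp g).integrable_norm_rpow hp₀ hp
  refine integral_mono_ae (integrable_finsetSum s fun i _ => hint (f i)) (hint _) ?_
  have hnonneg : ∀ᵐ t ∂μ, ∀ i, 0 ≤ f i t := ae_all_iff.2 fun i => (Lp.coeFn_nonneg (f i)).2 (hf i)
  filter_upwards [Lp.coeFn_finsetSum s f, hnonneg] with t hsum ht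
  rw [hsum, Finset.sum_apply, Real.norm_of_nonneg (Finset.sum_nonneg fun i _ => ht i)]
  simp only [Real.norm_of_nonneg (ht _)]
  exact sum_rpow_le_rpow_sum (ENNReal.toReal_mono hp hp₁) fun i _ => ht i

end Lp

theorem statement12_general {α β : Type*} [MeasurableSpace α] [MeasurableSpace β] {μ : Measure α}
    {ν : Measure β} {p q : ℝ≥0∞} [Fact (1 ≤ p)] [Fact (1 ≤ q)] (hqp : q < p)
    (T : Lp ℝ p μ →L[ℝ] Lp ℝ q ν) (hT : ∀ f, 0 ≤ f → 0 ≤ T f) : IsMWeaklyCompact T := by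
  have hq : q ≠ ∞ := hqp.ne_top
  have hq₀ : 0 < q.toReal := ENNReal.toReal_pos (zero_lt_one.trans_le Fact.out).ne' hq
  obtain ⟨r, hqr, hupper⟩ : ∃ r, q.toReal < r ∧ HasUpperEstimate (Lp ℝ p μ) r := by
    rcases eq_or_ne p ∞ with rfl | hp
    · exact ⟨q.toReal + 1, lt_add_one _, Lp_top_hasUpperEstimate μ (by positivity)⟩
    · exact ⟨p.toReal, ENNReal.toReal_strict_mono hp hqp, Lp_hasUpperEstimate μ hp⟩
  exact isMWeaklyCompact_of_hasUpperEstimate_of_hasLowerEstimate hq₀ hqr hupper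
    (Lp_hasLowerEstimate ν hq) T hT

/-- Let `1 ≤ q < p < ∞` and let `T : L_p[0,1] → L_q[0,1]` be a positive
bounded operator. Then `T` is M-weakly compact: for every norm-bounded pairwise disjoint
sequence `(x n)` in `L_p`, `‖T x_n‖_q → 0`. -/
theorem statement12 (p q : ℝ) (hq : 1 ≤ q) (hqp : q < p)
    [Fact (1 ≤ ENNReal.ofReal p)] [Fact (1 ≤ ENNReal.ofReal q)]
    (T : Lp ℝ (ENNReal.ofReal p) μ01 →L[ℝ] Lp ℝ (ENNReal.ofReal q) μ01)
    (hpos : ∀ f, 0 ≤ f → 0 ≤ T f)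
    (x : ℕ → Lp ℝ (ENNReal.ofReal p) μ01)
    (B : ℝ) (hB : ∀ n, ‖x n‖ ≤ B)
    (hdisj : Pairwise fun n m => |x n| ⊓ |x m| = 0) :
    Filter.Tendsto (fun n => ‖T (x n)‖) atTop (nhds 0) := by
  have hpq := (ENNReal.ofReal_lt_ofReal_iff (zero_lt_one.trans (hq.trans_lt hqp))).2 hqp
  exact statement12_general hpq T hpos x ⟨B, hB⟩ hdisj
end
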